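/- arXiv:math/0503251 — 3 statements merged into one kernel-verified Lean document; each statement's English description precedes it below -/
import Mathlib

section
/- Let d ≥ 1, D ≥ 1, and let (A_n)_{n≥1} be rotor-router aggregation in ℤ^d built from any configuration of rotor stacks with discrepancy at most D. Suppose α ≥ 1, β ≥ 1 + 2/d, and c > 0 are such that ψ(A_n) ≤ c D^α n^β for all n ≥ 1. Then there is a constant c' depending only on d, c, α, β (not on D, n, or the rotor configuration) such that ψ(A_n) ≤ c' (D^{1 + α/2} n^{(1+β)/2} + n^{1 + 2/d}) for all n ≥ 1. -/
open scoped BigOperators Pointwise symmDiff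
open MeasureTheory Filter

noncomputable section
open scoped Classical
namespace RotorRouterPaper

/-- Sites of the lattice `ℤ^d`. -/
abbrev Site (d : ℕ) := Fin d → ℤ

/-- The `i`-th standard basis vector of `ℤ^d`. -/
def unitVec (d : ℕ) (i : Fin d) : Site d := fun j => if j = i then 1 else 0

/-- Squared Euclidean norm of a lattice point. -/
def nsq {d : ℕ} (x : Site d) : ℝ := ∑ i, ((x i : ℝ)) ^ 2

/-- Euclidean norm of a lattice point. -/
def enorm {d : ℕ} (x : Site d) : ℝ := Real.sqrt (nsq x)

/-- Adjacency `x ∼ y`: Euclidean distance one. -/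
def Adj {d : ℕ} (x y : Site d) : Prop := nsq (x - y) = 1

/-- `ω_d`, the Lebesgue volume of the unit ball in `ℝ^d`. -/
def ballVol (d : ℕ) : ℝ := (volume (Metric.ball (0 : EuclideanSpace ℝ (Fin d)) 1)).toReal

/-- The lattice ball `B_n = {y ∈ ℤ^d : ω_d ‖y‖^d < n}`. -/
def lball (d n : ℕ) : Set (Site d) := {y | ballVol d * enorm y ^ d < (n : ℝ)}

/-- Characterization of the expected exit time function of a (finite) region `A ⊆ ℤ^d`:
it vanishes off `A` and its discrete Laplacian is `-1` on `A`. -/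
def IsExitFun (d : ℕ) (A : Set (Site d)) (e : Site d → ℝ) : Prop :=
  (∀ x, x ∉ A → e x = 0) ∧
  ∀ x ∈ A, (1 / (2 * (d : ℝ))) * (∑ i, (e (x + unitVec d i) + e (x - unitVec d i))) - e x = -1

/-- The expected exit time function `x ↦ e_x(A)` (the unique function satisfying
`IsExitFun` when `A` is finite). -/
def exitFun (d : ℕ) (A : Set (Site d)) : Site d → ℝ :=
  if h : ∃ e, IsExitFun d A e then h.choose else 0

/-- `ē(A) = sup_x e_x(A)`. -/
def ebar (d : ℕ) (A : Set (Site d)) : ℝ := sSup (Set.range (exitFun d A))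

/-- `φ(n) = sup {ē(A) - e_o(B_n) : A ⊆ ℤ^d, |A| = n}`. -/
def phi (d n : ℕ) : ℝ :=
  sSup {t | ∃ A : Set (Site d), A.Finite ∧ A.ncard = n ∧ t = ebar d A - exitFun d (lball d n) 0}

/-- `Φ(n) = ∑_{j=1}^n φ(j)`. -/
def PhiSum (d n : ℕ) : ℝ := ∑ j ∈ Finset.Icc 1 n, phi d j

/-- `ψ(A) = ∑_{x ∈ A} ‖x‖²`. -/
def psi {d : ℕ} (A : Set (Site d)) : ℝ := ∑ᶠ x ∈ A, nsq x

/-- A cardinal direction in `ℤ^d`: one of `±e_1, …, ±e_d`. -/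
abbrev Dir (d : ℕ) := Fin d × Bool

/-- The lattice step vector of a cardinal direction. -/
def dirVec (d : ℕ) (ε : Dir d) : Site d := if ε.2 then unitVec d ε.1 else -unitVec d ε.1

/-- A configuration of rotor stacks `r` (with `r x i` the direction used for the
`(i+1)`-st visit to `x`) has discrepancy at most `D` if for every site, direction and `m ≥ 1`,
among the first `m` rotors of the stack each direction occurs `m/(2d)` times up to error `D`. -/
def HasDiscrepancy (d : ℕ) (D : ℝ) (r : Site d → ℕ → Dir d) : Prop :=
  ∀ (x : Site d) (ε : Dir d) (m : ℕ), 1 ≤ m →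
    |(({i | i < m ∧ r x i = ε} : Set ℕ).ncard : ℝ) - (m : ℝ) / (2 * (d : ℝ))| ≤ D

/-- One step of rotor-router walk on a state (current position, visit counts so far):
the particle at `p` being visited for the `(c p + 1)`-st time moves in direction
`r p (c p)` and the visit count at `p` increases by one. -/
def rstep {d : ℕ} (r : Site d → ℕ → Dir d) (s : Site d × (Site d → ℕ)) :
    Site d × (Site d → ℕ) :=
  (s.1 + dirVec d (r s.1 (s.2 s.1)), Function.update s.2 s.1 (s.2 s.1 + 1))

/-- The state after `t` steps of rotor-router walk started at the origin with visit counts `c`. -/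
def walkState {d : ℕ} (r : Site d → ℕ → Dir d) (c : Site d → ℕ) (t : ℕ) :
    Site d × (Site d → ℕ) :=
  (rstep r)^[t] (0, c)

/-- The number of steps until the rotor-router walk started at the origin
(with carried-over visit counts `c`) first leaves the region `A`. -/
def exitSteps {d : ℕ} (r : Site d → ℕ → Dir d) (A : Set (Site d)) (c : Site d → ℕ) : ℕ :=
  sInf {t | (walkState r c t).1 ∉ A}

/-- The state of rotor-router aggregation after `n` particles have walked and settled:
`(aggState r n).1` is the occupied region `A_{n+1}`, `(aggState r n).2.1` the accumulated
visit counts, and `(aggState r n).2.2` the total number `T_n` of steps taken so far. -/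
def aggState {d : ℕ} (r : Site d → ℕ → Dir d) : ℕ → Set (Site d) × (Site d → ℕ) × ℕ
  | 0 => ({0}, fun _ => 0, 0)
  | n + 1 =>
      let s := aggState r n
      let τ := exitSteps r s.1 s.2.1
      (insert (walkState r s.2.1 τ).1 s.1, (walkState r s.2.1 τ).2, s.2.2 + τ)

/-- The region `A_n` of rotor-router aggregation (for `n ≥ 1`). -/
def aggRegion {d : ℕ} (r : Site d → ℕ → Dir d) (n : ℕ) : Set (Site d) :=
  (aggState r (n - 1)).1

/-- `T_n`, the total number of steps taken by the first `n` particles. -/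
def totalSteps {d : ℕ} (r : Site d → ℕ → Dir d) (n : ℕ) : ℕ := (aggState r n).2.2

/-- `A^□ = A + [-1/2,1/2]^d ⊆ ℝ^d`. -/
def box (d : ℕ) (A : Set (Site d)) : Set (EuclideanSpace ℝ (Fin d)) :=
  {z | ∃ x ∈ A, ∀ i, |z i - (x i : ℝ)| ≤ 1 / 2}

/-- The closed Euclidean ball of unit volume centered at the origin of `ℝ^d`. -/
def unitVolBall (d : ℕ) : Set (EuclideanSpace ℝ (Fin d)) :=
  Metric.closedBall 0 (ballVol d ^ (-(1 : ℝ) / (d : ℝ)))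

/-- `A ⊆ ℤ^d` is orthoconvex if every line parallel to a coordinate axis meets `A`
in an interval. -/
def Orthoconvex (d : ℕ) (A : Set (Site d)) : Prop :=
  ∀ x ∈ A, ∀ i : Fin d, ∀ k : ℤ, 0 < k → x + k • unitVec d i ∈ A →
    ∀ j : ℤ, 0 < j → j < k → x + j • unitVec d i ∈ A

/-- The nonnegative orthant `Q ⊆ ℤ^d`. -/
def orthant (d : ℕ) : Set (Site d) := {x | ∀ i, 0 ≤ x i}

/-- The cube `C(o,r) = {x : ‖x‖_∞ ≤ r}`. -/
def cubeSet (d : ℕ) (r : ℕ) : Set (Site d) := {x | ∀ i, |x i| ≤ (r : ℤ)}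

/-- The boundary `∂C(o,r) = {x : ‖x‖_∞ = r + 1 and x ∼ y for some y ∈ C(o,r)}`. -/
def cubeBdry (d : ℕ) (r : ℕ) : Set (Site d) :=
  {x | (∀ i, |x i| ≤ (r : ℤ) + 1) ∧ (∃ i, |x i| = (r : ℤ) + 1) ∧ ∃ y ∈ cubeSet d r, Adj x y}

/-- Characterization of `h_r(x) = P_x(T_Q > T_{∂C(o,r)})`: it vanishes on
`Q ∩ (C(o,r) ∪ ∂C(o,r))`, equals `1` on `∂C(o,r) ∖ Q`, is discrete harmonic on
`C(o,r) ∖ Q`, and (as a normalization) vanishes off `C(o,r) ∪ ∂C(o,r)`. -/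
def IsOrthHarm (d : ℕ) (r : ℕ) (h : Site d → ℝ) : Prop :=
  (∀ x, x ∉ cubeSet d r ∪ cubeBdry d r → h x = 0) ∧
  (∀ x ∈ orthant d ∩ (cubeSet d r ∪ cubeBdry d r), h x = 0) ∧
  (∀ x ∈ cubeBdry d r \ orthant d, h x = 1) ∧
  (∀ x ∈ cubeSet d r \ orthant d,
    h x = (1 / (2 * (d : ℝ))) * ∑ i, (h (x + unitVec d i) + h (x - unitVec d i)))

/-- The function `h_r` of the previous characterization. -/
def orthHarm (d : ℕ) (r : ℕ) : Site d → ℝ :=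
  if h : ∃ f, IsOrthHarm d r f then h.choose else 0

/-- `p(k,r) = sup {h_r(x) : ‖x‖_∞ ≤ k}`. -/
def pkr (d k r : ℕ) : ℝ :=
  sSup {t | ∃ x : Site d, (∀ i, |x i| ≤ (k : ℤ)) ∧ t = orthHarm d r x}

/-- The exponent `γ_d` of Theorem 3.1. -/
def gam (d : ℕ) : ℝ :=
  if d = 1 then 1 else if d = 2 then 1 / 3
  else (2 : ℝ) ^ (-(d : ℝ)) / (2 * (d : ℝ) ^ 2 * Real.log 3)

/-! ## Heat kernel bound -/

lemma hk_central (m : ℕ) : (Nat.centralBinom m) ^ 2 * (2 * m + 1) ≤ 16 ^ m := by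
  induction m with
  | zero => simp
  | succ m ih =>
    have h := Nat.succ_mul_centralBinom_succ m
    have h2 : (m + 1) ^ 2 * ((Nat.centralBinom (m + 1)) ^ 2 * (2 * (m + 1) + 1))
        ≤ (m + 1) ^ 2 * 16 ^ (m + 1) := by
      calc (m + 1) ^ 2 * ((Nat.centralBinom (m + 1)) ^ 2 * (2 * (m + 1) + 1))
          = ((m + 1) * Nat.centralBinom (m + 1)) ^ 2 * (2 * (m + 1) + 1) := by ring
        _ = (Nat.centralBinom m ^ 2 * (2 * m + 1)) * (4 * ((2 * m + 1) * (2 * m + 3))) := by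
            rw [h]; ring
        _ ≤ 16 ^ m * (4 * (4 * (m + 1) ^ 2)) := by
            apply Nat.mul_le_mul ih
            nlinarith
        _ = (m + 1) ^ 2 * 16 ^ (m + 1) := by ring
    exact Nat.le_of_mul_le_mul_left h2 (by positivity)

lemma hk_choose (k j : ℕ) : (k.choose j) ^ 2 * (k + 1) ≤ 4 ^ k := by
  have h0 : (k.choose j) ^ 2 * (k + 1) ≤ (k.choose (k / 2)) ^ 2 * (k + 1) :=
    Nat.mul_le_mul_right _ (Nat.pow_le_pow_left (Nat.choose_le_middle j k) 2)
  refine h0.trans ?_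
  rcases Nat.even_or_odd' k with ⟨m, rfl | rfl⟩
  · have := hk_central m
    rw [Nat.centralBinom] at this
    rw [show 2 * m / 2 = m by omega, pow_mul]
    simpa using this
  · have h := hk_central (m + 1)
    have h3 : Nat.centralBinom (m + 1) = 2 * (2 * m + 1).choose m := by
      rw [Nat.centralBinom, show 2 * (m + 1) = 2 * m + 1 + 1 by ring, Nat.choose_succ_succ,
        ← Nat.choose_symm_half m]
      ring
    rw [h3] at h
    rw [show (2 * m + 1) / 2 = m by omega]
    have h4 : 4 * 4 ^ (2 * m + 1) = 16 ^ (m + 1) := by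
      rw [show (16 : ℕ) = 4 ^ 2 by norm_num, ← pow_mul]; ring
    nlinarith [Nat.zero_le ((2 * m + 1).choose m ^ 2)]

lemma hk_choose_real (k j : ℕ) : (k.choose j : ℝ) ≤ 2 ^ k * (Real.sqrt (k + 1))⁻¹ := by
  have h : ((k.choose j : ℝ)) ^ 2 * (k + 1) ≤ 4 ^ k := by exact_mod_cast hk_choose k j
  have hs : 0 < Real.sqrt ((k : ℝ) + 1) := Real.sqrt_pos.mpr (by positivity)
  rw [← div_eq_mul_inv, le_div_iff₀ hs]
  refine (pow_le_pow_iff_left₀ (by positivity) (by positivity) two_ne_zero).mp ?_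
  rw [mul_pow, Real.sq_sqrt (by positivity), ← pow_mul, mul_comm k 2, pow_mul]
  norm_num
  exact h

/-- One-coordinate step element. -/
def qel (d : ℕ) (i : Fin d) : AddMonoidAlgebra ℝ (Site d) :=
  AddMonoidAlgebra.single (unitVec d i) (1 / (2 * (d : ℝ)))
    + AddMonoidAlgebra.single (-unitVec d i) (1 / (2 * (d : ℝ)))

/-- Simple random walk step element. -/
def pel (d : ℕ) : AddMonoidAlgebra ℝ (Site d) := ∑ i, qel d i

lemma qel_pow (d : ℕ) (i : Fin d) (k : ℕ) :
    qel d i ^ k = ∑ j ∈ Finset.range (k + 1),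
      AddMonoidAlgebra.single ((2 * (j : ℤ) - k) • unitVec d i)
        ((1 / (2 * (d : ℝ))) ^ k * (k.choose j : ℝ)) := by
  rw [qel, add_pow]
  refine Finset.sum_congr rfl fun j hj => ?_
  have hj' : j ≤ k := by simpa [Nat.lt_succ_iff] using hj
  rw [AddMonoidAlgebra.single_pow, AddMonoidAlgebra.single_pow, AddMonoidAlgebra.single_mul_single,
    ← nsmul_eq_mul', AddMonoidAlgebra.smul_single, ← pow_add, Nat.add_sub_cancel' hj']
  congr 1
  · ext l
    simp only [Pi.add_apply, Pi.smul_apply, smul_eq_mul, nsmul_eq_mul]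
    push_cast [Nat.cast_sub hj']
    simp
    ring
  · rw [nsmul_eq_mul, mul_comm]

lemma prod_single {d : ℕ} {ι : Type*} (s : Finset ι) (a : ι → Site d) (b : ι → ℝ) :
    ∏ i ∈ s, AddMonoidAlgebra.single (a i) (b i)
      = AddMonoidAlgebra.single (∑ i ∈ s, a i) (∏ i ∈ s, b i) := by
  induction s using Finset.induction_on with
  | empty => simp [AddMonoidAlgebra.one_def]
  | insert i s hi ih => simp [Finset.prod_insert hi, Finset.sum_insert hi, ih]

lemma prod_qel_coeff (d : ℕ) (k : Fin d → ℕ) (x : Site d) :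
    (∏ i, qel d i ^ k i).coeff x
      ≤ ∏ i, ((1 / (d : ℝ)) ^ k i * (Real.sqrt (k i + 1))⁻¹) := by
  have hM : 0 ≤ ∏ i, ((1 / (d : ℝ)) ^ k i * (Real.sqrt (k i + 1))⁻¹) :=
    Finset.prod_nonneg fun i _ => by positivity
  simp only [qel_pow]
  rw [Finset.prod_univ_sum]
  simp only [prod_single, AddMonoidAlgebra.coeff_sum, AddMonoidAlgebra.coeff_single,
    Finsupp.finsetSum_apply]
  have hv : ∀ (j : Fin d → ℕ) (l : Fin d),
      (∑ i, (2 * (j i : ℤ) - k i) • unitVec d i) l = 2 * (j l : ℤ) - k l := by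
    intro j l
    simp [unitVec]
  by_cases h : ∃ j ∈ Fintype.piFinset fun i => Finset.range (k i + 1),
      (∑ i, (2 * (j i : ℤ) - k i) • unitVec d i) = x
  · obtain ⟨j, hj, hjx⟩ := h
    rw [Finset.sum_eq_single_of_mem j hj]
    · rw [hjx, Finsupp.single_eq_same]
      apply Finset.prod_le_prod
      · intro i _; positivity
      · intro i _
        have := hk_choose_real (k i) (j i)
        calc (1 / (2 * (d : ℝ))) ^ k i * ((k i).choose (j i) : ℝ)
            ≤ (1 / (2 * (d : ℝ))) ^ k i * (2 ^ k i * (Real.sqrt (k i + 1))⁻¹) := by gcongr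
          _ = (1 / (2 * (d : ℝ)) * 2) ^ k i * (Real.sqrt (k i + 1))⁻¹ := by
              rw [mul_pow]; ring
          _ = _ := by
              congr 2
              rw [one_div, mul_inv]; ring
    · intro j' _ hne
      rw [Finsupp.single_apply, if_neg]
      intro h'
      apply hne
      ext l
      have h1 := hv j' l
      rw [h', ← hjx, hv j l] at h1
      omega
  · push Not at h
    rw [Finset.sum_eq_zero]
    · exact hM
    · intro j hj
      rw [Finsupp.single_apply, if_neg (h j hj)]

lemma multinom_sum_le (d t : ℕ) :
    ∑ k ∈ Finset.piAntidiag (Finset.univ : Finset (Fin d)) t,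
      (Nat.multinomial Finset.univ k : ℝ) * ∏ i, ((k i : ℝ) + 1)⁻¹
        ≤ (d : ℝ) ^ (t + d) / ((t : ℝ) + 1) ^ d := by
  have hsum : ∑ k ∈ Finset.piAntidiag (Finset.univ : Finset (Fin d)) (t + d),
      (Nat.multinomial Finset.univ k : ℝ) = (d : ℝ) ^ (t + d) := by
    have := Finset.sum_pow_eq_sum_piAntidiag (Finset.univ : Finset (Fin d)) (fun _ => (1 : ℝ)) (t + d)
    simpa using this.symm
  have hterm : ∀ k ∈ Finset.piAntidiag (Finset.univ : Finset (Fin d)) t,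
      (Nat.multinomial Finset.univ k : ℝ) * ∏ i, ((k i : ℝ) + 1)⁻¹
        ≤ (Nat.multinomial Finset.univ (fun i => k i + 1) : ℝ) / ((t : ℝ) + 1) ^ d := by
    intro k hk
    have hk' : ∑ i, k i = t := by simpa using hk
    have e1 := Nat.multinomial_spec (Finset.univ : Finset (Fin d)) k
    have e2 := Nat.multinomial_spec (Finset.univ : Finset (Fin d)) (fun i => k i + 1)
    have hs : ∑ i, (k i + 1) = t + d := by simp [Finset.sum_add_distrib, hk']
    rw [hk'] at e1
    rw [hs] at e2
    simp only [Nat.factorial_succ, Finset.prod_mul_distrib] at e2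
    have e3 : t.factorial * (t + 1) ^ d ≤ (t + d).factorial := Nat.factorial_mul_pow_le_factorial
    rw [← e1, ← e2] at e3
    have hF : 0 < ∏ i, (k i).factorial := Finset.prod_pos fun i _ => Nat.factorial_pos _
    have e4 : Nat.multinomial Finset.univ k * (t + 1) ^ d
        ≤ (∏ i, (k i + 1)) * Nat.multinomial Finset.univ (fun i => k i + 1) := by
      apply Nat.le_of_mul_le_mul_left _ hF
      calc _ = _ := by ring
        _ ≤ _ := e3
        _ = _ := by ring
    have e5 : (Nat.multinomial Finset.univ k : ℝ) * ((t : ℝ) + 1) ^ d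
        ≤ (∏ i, ((k i : ℝ) + 1)) * (Nat.multinomial Finset.univ (fun i => k i + 1) : ℝ) := by
      exact_mod_cast e4
    have hP : (0 : ℝ) < ∏ i, ((k i : ℝ) + 1) := Finset.prod_pos fun i _ => by positivity
    rw [Finset.prod_inv_distrib, ← div_eq_mul_inv, div_le_div_iff₀ hP (by positivity)]
    linarith
  refine (Finset.sum_le_sum hterm).trans ?_
  rw [← Finset.sum_div, ← hsum]
  gcongr
  rw [← Finset.sum_image (f := fun k => (Nat.multinomial Finset.univ k : ℝ))
    (g := fun (k : Fin d → ℕ) i => k i + 1)]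
  · apply Finset.sum_le_sum_of_subset_of_nonneg
    · intro k hk
      obtain ⟨k', hk', rfl⟩ := Finset.mem_image.mp hk
      have hk'' : ∑ i, k' i = t := by simpa using hk'
      simp [Finset.sum_add_distrib, hk'']
    · intros; positivity
  · intro a _ b _ hab
    ext i
    have := congrFun hab i
    simpa using this

lemma pel_pow_coeff (d : ℕ) (hd : 1 ≤ d) (t : ℕ) (x : Site d) :
    (pel d ^ t).coeff x ≤ Real.sqrt ((d / ((t : ℝ) + 1)) ^ d) := by
  have hd0 : (0 : ℝ) < d := by exact_mod_cast hd
  set I := Finset.piAntidiag (Finset.univ : Finset (Fin d)) t with hI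
  have hsum : ∑ k ∈ I, (Nat.multinomial Finset.univ k : ℝ) = (d : ℝ) ^ t := by
    have := Finset.sum_pow_eq_sum_piAntidiag (Finset.univ : Finset (Fin d)) (fun _ => (1 : ℝ)) t
    simpa using this.symm
  have h1 : (pel d ^ t).coeff x ≤ (1 / (d : ℝ)) ^ t *
      ∑ k ∈ I, (Nat.multinomial Finset.univ k : ℝ) * ∏ i, (Real.sqrt (k i + 1))⁻¹ := by
    rw [pel, Finset.sum_pow_eq_sum_piAntidiag, AddMonoidAlgebra.coeff_sum,
      Finsupp.finsetSum_apply, Finset.mul_sum]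
    apply Finset.sum_le_sum
    intro k hk
    have hk' : ∑ i, k i = t := by simpa [hI] using hk
    have := prod_qel_coeff d k x
    rw [Finset.prod_mul_distrib, Finset.prod_pow_eq_pow_sum, hk'] at this
    rw [← nsmul_eq_mul, AddMonoidAlgebra.coeff_smul, Finsupp.smul_apply, nsmul_eq_mul]
    calc _ ≤ (Nat.multinomial Finset.univ k : ℝ) * ((1 / (d : ℝ)) ^ t * ∏ i, (Real.sqrt (k i + 1))⁻¹) := by
            gcongr
      _ = _ := by ring
  refine h1.trans ?_
  apply Real.le_sqrt_of_sq_le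
  have hcs : (∑ k ∈ I, (Nat.multinomial Finset.univ k : ℝ) * ∏ i, (Real.sqrt (k i + 1))⁻¹) ^ 2
      ≤ (∑ k ∈ I, (Nat.multinomial Finset.univ k : ℝ)) *
        ∑ k ∈ I, (Nat.multinomial Finset.univ k : ℝ) * ∏ i, ((k i : ℝ) + 1)⁻¹ := by
    apply Finset.sum_sq_le_sum_mul_sum_of_sq_le_mul
    · intros; positivity
    · intro k _
      exact mul_nonneg (by positivity) (Finset.prod_nonneg fun i _ => by positivity)
    · intro k _
      apply le_of_eq
      rw [mul_pow, ← Finset.prod_pow]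
      have : ∀ i : Fin d, ((Real.sqrt ((k i : ℝ) + 1))⁻¹) ^ 2 = ((k i : ℝ) + 1)⁻¹ := by
        intro i
        rw [inv_pow, Real.sq_sqrt (by positivity)]
      simp only [this]
      ring
  rw [hsum] at hcs
  have h2 := multinom_sum_le d t
  rw [← hI] at h2
  rw [mul_pow]
  calc _ ≤ ((1 / (d : ℝ)) ^ t) ^ 2 * ((d : ℝ) ^ t * ((d : ℝ) ^ (t + d) / ((t : ℝ) + 1) ^ d)) := by
        gcongr
        exact hcs.trans (by gcongr)
    _ = _ := by
        rw [div_pow (d : ℝ) ((t : ℝ) + 1), div_pow, one_pow, pow_add]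
        field_simp

/-! ## The test function -/

lemma sum_dir {d : ℕ} (F : Site d → ℝ) :
    ∑ ε : Dir d, F (dirVec d ε) = ∑ i, (F (unitVec d i) + F (-unitVec d i)) := by
  rw [Fintype.sum_prod_type]
  refine Finset.sum_congr rfl fun i _ => ?_
  simp [dirVec]

lemma pel_mul_coeff (d : ℕ) (h : AddMonoidAlgebra ℝ (Site d)) (x : Site d) :
    (pel d * h).coeff x = (1 / (2 * (d : ℝ))) * ∑ ε : Dir d, h.coeff (x + dirVec d ε) := by
  rw [sum_dir (fun v => h.coeff (x + v)), pel, Finset.sum_mul, AddMonoidAlgebra.coeff_sum,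
    Finsupp.finsetSum_apply, Finset.mul_sum]
  refine Finset.sum_congr rfl fun i _ => ?_
  rw [qel, add_mul, AddMonoidAlgebra.coeff_add, Finsupp.add_apply,
    AddMonoidAlgebra.coeff_single_mul_apply, AddMonoidAlgebra.coeff_single_mul_apply]
  rw [neg_neg, add_comm x, add_comm x]
  ring

lemma card_dir (d : ℕ) : (Finset.univ : Finset (Dir d)).card = 2 * d := by
  simp [Dir, mul_comm]

/-- Indicator of `B` as an element of the group algebra. -/
def ind {d : ℕ} (B : Finset (Site d)) : AddMonoidAlgebra ℝ (Site d) :=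
  ∑ y ∈ B, AddMonoidAlgebra.single y 1

lemma ind_coeff {d : ℕ} (B : Finset (Site d)) (x : Site d) :
    (ind B).coeff x = if x ∈ B then 1 else 0 := by
  simp [ind, Finsupp.single_apply]

lemma pel_ind_bounds (d : ℕ) (hd : 1 ≤ d) (B : Finset (Site d)) (t : ℕ) (x : Site d) :
    0 ≤ (pel d ^ t * ind B).coeff x ∧ (pel d ^ t * ind B).coeff x ≤ 1 := by
  have hd0 : (0 : ℝ) < d := by exact_mod_cast hd
  induction t generalizing x with
  | zero =>
    rw [pow_zero, one_mul, ind_coeff]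
    split_ifs <;> norm_num
  | succ t ih =>
    rw [pow_succ', mul_assoc, pel_mul_coeff]
    constructor
    · exact mul_nonneg (by positivity) (Finset.sum_nonneg fun ε _ => (ih _).1)
    · have : ∑ ε : Dir d, (pel d ^ t * ind B).coeff (x + dirVec d ε) ≤ ∑ ε : Dir d, (1 : ℝ) :=
        Finset.sum_le_sum fun ε _ => (ih _).2
      rw [Finset.sum_const, card_dir, nsmul_eq_mul, mul_one] at this
      push_cast at this
      rw [one_div, inv_mul_le_iff₀ (by positivity)]
      linarith

lemma pel_ind_le (d : ℕ) (hd : 1 ≤ d) (B : Finset (Site d)) (t : ℕ) (x : Site d) :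
    (pel d ^ t * ind B).coeff x ≤ B.card * Real.sqrt ((d / ((t : ℝ) + 1)) ^ d) := by
  rw [ind, Finset.mul_sum, AddMonoidAlgebra.coeff_sum, Finsupp.finsetSum_apply, ← nsmul_eq_mul]
  apply Finset.sum_le_card_nsmul
  intro y _
  rw [AddMonoidAlgebra.coeff_mul_single_apply, mul_one]
  exact pel_pow_coeff d hd t _

lemma energy (d : ℕ) (hd : 1 ≤ d) (h : AddMonoidAlgebra ℝ (Site d)) (B : Finset (Site d))
    (h0 : ∀ x, 0 ≤ h.coeff x)
    (hB : ∀ x, h.coeff x - (pel d * h).coeff x ≤ (ind B).coeff x) :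
    ∑ x ∈ B, ∑ ε : Dir d, (h.coeff (x + dirVec d ε) - h.coeff x) ^ 2
      ≤ 4 * d * ∑ x ∈ B, h.coeff x := by
  have hd0 : (0 : ℝ) < d := by exact_mod_cast hd
  obtain ⟨f, hf⟩ : ∃ f : Site d → ℝ, f = h.coeff := ⟨_, rfl⟩
  have hfs : f.HasFiniteSupport := by rw [hf]; exact h.coeff.hasFiniteSupport
  have hP : ∀ x, (pel d * h).coeff x = (1 / (2 * (d : ℝ))) * ∑ ε : Dir d, f (x + dirVec d ε) := by
    intro x
    rw [pel_mul_coeff, hf]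
  simp only [hP] at hB
  simp only [← hf] at h0 hB ⊢
  clear hP hf
  have hfin : ∀ g : Site d → ℝ, (∀ x, f x = 0 → g x = 0) → Summable g := by
    intro g hg
    apply summable_of_hasFiniteSupport
    apply Set.Finite.subset hfs
    intro x hx hx'
    exact hx (hg x hx')
  have s1 : HasSum (fun x => f x ^ 2) (∑' x, f x ^ 2) :=
    (hfin _ (by intro x hx; simp [hx])).hasSum
  have s2 : ∀ ε : Dir d, HasSum (fun x => f (x + dirVec d ε) ^ 2) (∑' x, f x ^ 2) := by
    intro ε
    have := ((Equiv.addRight (dirVec d ε)).hasSum_iff (f := fun x => f x ^ 2)).mpr s1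
    simpa only [Function.comp_def, Equiv.coe_addRight] using this
  have s3 : ∀ ε : Dir d, HasSum (fun x => f x * f (x + dirVec d ε))
      (∑' x, f x * f (x + dirVec d ε)) :=
    fun ε => (hfin _ (by intro x hx; simp [hx])).hasSum
  set s := ∑' x, f x ^ 2
  set c : Dir d → ℝ := fun ε => ∑' x, f x * f (x + dirVec d ε)
  have s4 : HasSum (fun x => ∑ ε : Dir d, (f (x + dirVec d ε) - f x) ^ 2)
      (∑ ε : Dir d, (s + s - 2 * c ε)) := by
    apply hasSum_sum
    intro ε _
    have := ((s2 ε).add s1).sub ((s3 ε).mul_left 2)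
    refine Eq.subst (motive := fun g => HasSum g _) (funext fun x => ?_) this
    ring
  have s5 : HasSum (fun x => f x * (f x - (1 / (2 * (d : ℝ))) * ∑ ε : Dir d, f (x + dirVec d ε)))
      (s - (1 / (2 * (d : ℝ))) * ∑ ε, c ε) := by
    have h5 : HasSum (fun x => ∑ ε : Dir d, f x * f (x + dirVec d ε)) (∑ ε, c ε) :=
      hasSum_sum fun ε _ => s3 ε
    have := s1.sub (h5.mul_left (1 / (2 * (d : ℝ))))
    refine Eq.subst (motive := fun g => HasSum g _) (funext fun x => ?_) this
    rw [← Finset.mul_sum]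
    ring
  have s6 : HasSum (fun x => f x * (ind B).coeff x) (∑ x ∈ B, f x * (ind B).coeff x) := by
    apply hasSum_sum_of_ne_finset_zero
    intro x hx
    rw [ind_coeff, if_neg hx, mul_zero]
  have l1 : s - (1 / (2 * (d : ℝ))) * ∑ ε, c ε ≤ ∑ x ∈ B, f x * (ind B).coeff x :=
    hasSum_le (fun x => mul_le_mul_of_nonneg_left (hB x) (h0 x)) s5 s6
  have l2 : ∑ x ∈ B, f x * (ind B).coeff x = ∑ x ∈ B, f x :=
    Finset.sum_congr rfl fun x hx => by rw [ind_coeff, if_pos hx, mul_one]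
  have l3 := sum_le_hasSum B (fun x _ => Finset.sum_nonneg fun ε _ => sq_nonneg _) s4
  refine l3.trans ?_
  rw [Finset.sum_sub_distrib, Finset.sum_const, card_dir, nsmul_eq_mul, ← Finset.mul_sum]
  rw [l2] at l1
  have : 4 * (d : ℝ) * (s - (1 / (2 * (d : ℝ))) * ∑ ε, c ε) ≤ 4 * d * ∑ x ∈ B, f x := by gcongr
  refine le_trans (le_of_eq ?_) this
  push_cast
  field_simp
  ring

lemma exists_test (d : ℕ) (hd : 1 ≤ d) (n : ℕ) (hn : 1 ≤ n) (B : Finset (Site d))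
    (hB : B.card ≤ n) :
    ∃ f : Site d → ℝ, (∀ x, 0 ≤ f x) ∧ (∀ x, f x ≤ 5 * d * (n : ℝ) ^ (2 / (d : ℝ))) ∧
      (∀ x ∈ B, (1 / (2 * (d : ℝ))) * ∑ ε : Dir d, (f (x + dirVec d ε) - f x) ≤ -(1 / 2)) ∧
      ∑ x ∈ B, ∑ ε : Dir d, (f (x + dirVec d ε) - f x) ^ 2
        ≤ 4 * d * (n * (5 * d * (n : ℝ) ^ (2 / (d : ℝ)))) := by
  have hd0 : (0 : ℝ) < d := by exact_mod_cast hd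
  have hd1 : (1 : ℝ) ≤ d := by exact_mod_cast hd
  have hn1 : (1 : ℝ) ≤ n := by exact_mod_cast hn
  set R : ℝ := (n : ℝ) ^ (2 / (d : ℝ)) with hR
  have hR1 : 1 ≤ R := Real.one_le_rpow hn1 (by positivity)
  have hRd : R ^ d = (n : ℝ) ^ 2 := by
    rw [hR, ← Real.rpow_natCast, ← Real.rpow_mul (by positivity), div_mul_cancel₀ _ hd0.ne']
    norm_num
  set T := ⌈4 * d * R⌉₊ with hT
  have hT1 : 4 * d * R ≤ T := Nat.le_ceil _
  have hT2 : (T : ℝ) ≤ 5 * d * R := by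
    have := (Nat.ceil_lt_add_one (show 0 ≤ 4 * d * R by positivity)).le
    nlinarith
  set h := (∑ t ∈ Finset.range T, pel d ^ t) * ind B with hh
  have hc : ∀ x, h.coeff x = ∑ t ∈ Finset.range T, (pel d ^ t * ind B).coeff x := by
    intro x
    rw [hh, Finset.sum_mul, AddMonoidAlgebra.coeff_sum, Finsupp.finsetSum_apply]
  have h0 : ∀ x, 0 ≤ h.coeff x := fun x => by
    rw [hc]; exact Finset.sum_nonneg fun t _ => (pel_ind_bounds d hd B t x).1
  have hle : ∀ x, h.coeff x ≤ 5 * d * R := fun x => by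
    rw [hc]
    refine (Finset.sum_le_card_nsmul _ _ 1 fun t _ => (pel_ind_bounds d hd B t x).2).trans ?_
    simpa using hT2
  have htel : ∀ x, h.coeff x - (pel d * h).coeff x
      = (ind B).coeff x - (pel d ^ T * ind B).coeff x := by
    intro x
    have e : h - pel d * h = ind B - pel d ^ T * ind B := by
      have := geom_sum_mul (pel d) T
      have e2 : h - pel d * h = - (((∑ t ∈ Finset.range T, pel d ^ t) * (pel d - 1)) * ind B) := by
        rw [hh]; ring
      rw [e2, this]; ring
    have := congrArg (fun z => z.coeff x) e
    simpa using this
  have hsmall : ∀ x, (pel d ^ T * ind B).coeff x ≤ 1 / 2 := by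
    intro x
    refine (pel_ind_le d hd B T x).trans ?_
    have hq : (d / ((T : ℝ) + 1)) ^ d ≤ (1 / (2 * n)) ^ 2 := by
      have hq1 : d / ((T : ℝ) + 1) ≤ 1 / (4 * R) := by
        rw [div_le_div_iff₀ (by positivity) (by positivity)]
        linarith
      calc (d / ((T : ℝ) + 1)) ^ d ≤ (1 / (4 * R)) ^ d := by gcongr
        _ = 1 / (4 ^ d * (n : ℝ) ^ 2) := by rw [div_pow, mul_pow, hRd, one_pow]
        _ ≤ 1 / (4 ^ 1 * (n : ℝ) ^ 2) := by
            gcongr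
            norm_num
        _ = _ := by ring
    have hq2 : Real.sqrt ((d / ((T : ℝ) + 1)) ^ d) ≤ 1 / (2 * n) := by
      rw [Real.sqrt_le_left (by positivity)]
      exact hq
    calc (B.card : ℝ) * Real.sqrt ((d / ((T : ℝ) + 1)) ^ d) ≤ n * (1 / (2 * n)) := by
          gcongr
      _ = 1 / 2 := by field_simp
  refine ⟨h.coeff, h0, hle, ?_, ?_⟩
  · intro x hx
    have e := htel x
    rw [ind_coeff, if_pos hx, pel_mul_coeff] at e
    have := hsmall x
    rw [Finset.sum_sub_distrib, Finset.sum_const, card_dir, nsmul_eq_mul, mul_sub]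
    have e3 : 1 / (2 * (d : ℝ)) * (((2 * d : ℕ) : ℝ) * h.coeff x) = h.coeff x := by
      push_cast
      field_simp
    rw [e3]
    linarith
  · refine (energy d hd h B h0 ?_).trans ?_
    · intro x
      rw [htel x]
      linarith [(pel_ind_bounds d hd B T x).1]
    · gcongr
      refine (Finset.sum_le_card_nsmul _ _ _ fun x _ => hle x).trans ?_
      rw [nsmul_eq_mul]
      gcongr

/-! ## Rotor-router telescoping -/

/-- Total change of `f` over all rotor moves recorded in the visit counts `c`, at sites of `B`. -/
def gsum {d : ℕ} (r : Site d → ℕ → Dir d) (f : Site d → ℝ) (B : Finset (Site d))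
    (c : Site d → ℕ) : ℝ :=
  ∑ x ∈ B, ∑ i ∈ Finset.range (c x), (f (x + dirVec d (r x i)) - f x)

lemma gsum_update {d : ℕ} (r : Site d → ℕ → Dir d) (f : Site d → ℝ) (B : Finset (Site d))
    (c : Site d → ℕ) (p : Site d) (hp : p ∈ B) :
    gsum r f B (Function.update c p (c p + 1))
      = gsum r f B c + (f (p + dirVec d (r p (c p))) - f p) := by
  unfold gsum
  rw [← Finset.add_sum_erase B _ hp, ← Finset.add_sum_erase B _ hp, Function.update_self,
    Finset.sum_range_succ]
  have : ∑ x ∈ B.erase p, ∑ i ∈ Finset.range (Function.update c p (c p + 1) x),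
      (f (x + dirVec d (r x i)) - f x)
      = ∑ x ∈ B.erase p, ∑ i ∈ Finset.range (c x), (f (x + dirVec d (r x i)) - f x) := by
    refine Finset.sum_congr rfl fun x hx => ?_
    rw [Function.update_of_ne (Finset.ne_of_mem_erase hx)]
  rw [this]
  ring

lemma gsum_walk {d : ℕ} (r : Site d → ℕ → Dir d) (f : Site d → ℝ) (B : Finset (Site d))
    (c : Site d → ℕ) (t : ℕ) (h : ∀ s < t, (walkState r c s).1 ∈ B) :
    gsum r f B (walkState r c t).2 = gsum r f B c + (f (walkState r c t).1 - f 0) := by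
  induction t with
  | zero => simp [walkState]
  | succ t ih =>
    have ih' := ih fun s hs => h s (by omega)
    have e : walkState r c (t + 1) = rstep r (walkState r c t) := by
      simp only [walkState, Function.iterate_succ_apply']
    rw [e, rstep]
    simp only
    rw [gsum_update r f B _ _ (h t (by omega)), ih']
    ring

/-- The stopping site of the `k`-th particle. -/
def stopSite {d : ℕ} (r : Site d → ℕ → Dir d) (k : ℕ) : Site d :=
  (walkState r (aggState r k).2.1 (exitSteps r (aggState r k).1 (aggState r k).2.1)).1

lemma aggState_succ_fst {d : ℕ} (r : Site d → ℕ → Dir d) (k : ℕ) :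
    (aggState r (k + 1)).1 = insert (stopSite r k) (aggState r k).1 := rfl

lemma aggState_succ_snd {d : ℕ} (r : Site d → ℕ → Dir d) (k : ℕ) :
    (aggState r (k + 1)).2.1 = (walkState r (aggState r k).2.1
      (exitSteps r (aggState r k).1 (aggState r k).2.1)).2 := rfl

lemma stopSite_cases {d : ℕ} (r : Site d → ℕ → Dir d) (k : ℕ) :
    stopSite r k ∉ (aggState r k).1 ∨ stopSite r k = 0 := by
  by_cases h : {t | (walkState r (aggState r k).2.1 t).1 ∉ (aggState r k).1}.Nonempty
  · left
    exact Nat.sInf_mem h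
  · right
    rw [Set.not_nonempty_iff_eq_empty] at h
    rw [stopSite, exitSteps, h, Nat.sInf_empty]
    rfl

lemma agg_finset {d : ℕ} (r : Site d → ℕ → Dir d) (n : ℕ) :
    ∃ B : Finset (Site d), (B : Set (Site d)) = (aggState r n).1 ∧ B.card ≤ n + 1 ∧
      ∑ x ∈ B, nsq x = ∑ k ∈ Finset.range n, nsq (stopSite r k) := by
  have h0 : nsq (0 : Site d) = 0 := by simp [nsq]
  induction n with
  | zero => exact ⟨{0}, by simp [aggState], by simp, by simp [h0]⟩
  | succ n ih =>
    obtain ⟨B, hB, hc, hs⟩ := ih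
    refine ⟨insert (stopSite r n) B, ?_, ?_, ?_⟩
    · rw [aggState_succ_fst, Finset.coe_insert, hB]
    · exact (Finset.card_insert_le _ _).trans (by omega)
    · rw [Finset.sum_range_succ, ← hs]
      by_cases hm : stopSite r n ∈ B
      · rw [Finset.insert_eq_of_mem hm]
        rcases stopSite_cases r n with h | h
        · exact absurd (by rw [← hB]; exact hm) h
        · rw [h, h0, add_zero]
      · rw [Finset.sum_insert hm, add_comm]

lemma agg_mono {d : ℕ} (r : Site d → ℕ → Dir d) : Monotone fun n => (aggState r n).1 :=
  monotone_nat_of_le_succ fun n => by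
    rw [aggState_succ_fst]
    exact Set.subset_insert _ _

lemma gsum_agg {d : ℕ} (r : Site d → ℕ → Dir d) (f : Site d → ℝ) (B : Finset (Site d)) (N : ℕ)
    (hB : (B : Set (Site d)) = (aggState r N).1) (n : ℕ) (hn : n ≤ N) :
    gsum r f B (aggState r n).2.1 = ∑ k ∈ Finset.range n, (f (stopSite r k) - f 0) := by
  induction n with
  | zero => simp [gsum, aggState]
  | succ n ih =>
    rw [Finset.sum_range_succ, ← ih (by omega), aggState_succ_snd, gsum_walk]
    · rfl
    · intro s hs
      have h1 : (walkState r (aggState r n).2.1 s).1 ∈ (aggState r n).1 := by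
        have := Nat.notMem_of_lt_sInf hs
        simpa using this
      have h2 := agg_mono r (show n ≤ N by omega) h1
      rw [← Finset.mem_coe, hB]
      exact h2

lemma disc_bound {d : ℕ} {D : ℝ} (hD : 1 ≤ D) {r : Site d → ℕ → Dir d}
    (hr : HasDiscrepancy d D r) (F : Dir d → ℝ) (x : Site d) (m : ℕ) :
    |∑ i ∈ Finset.range m, F (r x i) - m * ((1 / (2 * (d : ℝ))) * ∑ ε, F ε)|
      ≤ D * ∑ ε, |F ε| := by
  rcases Nat.eq_zero_or_pos m with rfl | hm
  · simp only [Finset.range_zero, Finset.sum_empty, Nat.cast_zero, zero_mul, sub_zero, abs_zero]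
    exact mul_nonneg (by linarith) (Finset.sum_nonneg fun ε _ => abs_nonneg _)
  have hcount : ∀ ε, (({i | i < m ∧ r x i = ε} : Set ℕ).ncard)
      = ((Finset.range m).filter (fun i => r x i = ε)).card := by
    intro ε
    rw [← Set.ncard_coe_finset]
    congr 1
    ext i
    simp
  have h1 : ∑ i ∈ Finset.range m, F (r x i)
      = ∑ ε, (({i | i < m ∧ r x i = ε} : Set ℕ).ncard : ℝ) * F ε := by
    rw [← Finset.sum_fiberwise (Finset.range m) (fun i => r x i)]
    refine Finset.sum_congr rfl fun ε _ => ?_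
    rw [hcount, ← nsmul_eq_mul]
    apply Finset.sum_eq_card_nsmul
    intro i hi
    rw [(Finset.mem_filter.mp hi).2]
  have h2 : ∑ i ∈ Finset.range m, F (r x i) - m * ((1 / (2 * (d : ℝ))) * ∑ ε, F ε)
      = ∑ ε, ((({i | i < m ∧ r x i = ε} : Set ℕ).ncard : ℝ) - (m : ℝ) / (2 * (d : ℝ))) * F ε := by
    rw [h1]
    simp only [sub_mul, Finset.sum_sub_distrib, ← Finset.mul_sum]
    ring
  rw [h2, Finset.mul_sum]
  refine (Finset.abs_sum_le_sum_abs _ _).trans (Finset.sum_le_sum fun ε _ => ?_)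
  rw [abs_mul]
  exact mul_le_mul_of_nonneg_right (hr x ε m hm) (abs_nonneg _)

lemma gsum_bound {d : ℕ} {D : ℝ} (hD : 1 ≤ D) {r : Site d → ℕ → Dir d}
    (hr : HasDiscrepancy d D r) (f : Site d → ℝ) (B : Finset (Site d)) (c : Site d → ℕ) :
    |gsum r f B c
      - ∑ x ∈ B, (c x : ℝ) * ((1 / (2 * (d : ℝ))) * ∑ ε : Dir d, (f (x + dirVec d ε) - f x))|
      ≤ D * ∑ x ∈ B, ∑ ε : Dir d, |f (x + dirVec d ε) - f x| := by
  rw [gsum, ← Finset.sum_sub_distrib, Finset.mul_sum]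
  refine (Finset.abs_sum_le_sum_abs _ _).trans (Finset.sum_le_sum fun x _ => ?_)
  exact disc_bound hD hr (fun ε => f (x + dirVec d ε) - f x) x (c x)

lemma cs_bound {d : ℕ} (B : Finset (Site d)) (n : ℕ) (hB : B.card ≤ n)
    (F : Site d → Dir d → ℝ) (E : ℝ) (hE : ∑ x ∈ B, ∑ ε, F x ε ^ 2 ≤ E) :
    ∑ x ∈ B, ∑ ε, |F x ε| ≤ Real.sqrt (2 * d * n * E) := by
  apply Real.le_sqrt_of_sq_le
  have h0 : 0 ≤ ∑ x ∈ B, ∑ ε, F x ε ^ 2 :=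
    Finset.sum_nonneg fun x _ => Finset.sum_nonneg fun ε _ => sq_nonneg _
  rw [← Finset.sum_product' B Finset.univ (fun x ε => |F x ε|)]
  rw [← Finset.sum_product' B Finset.univ (fun x ε => F x ε ^ 2)] at hE h0
  refine (sq_sum_le_card_mul_sum_sq).trans ?_
  simp only [sq_abs]
  rw [Finset.card_product, card_dir]
  have : ((B.card * (2 * d) : ℕ) : ℝ) ≤ 2 * d * n := by
    push_cast
    have : (B.card : ℝ) ≤ n := by exact_mod_cast hB
    nlinarith [(Nat.cast_nonneg d : (0 : ℝ) ≤ d)]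
  gcongr

lemma nsq_step {d : ℕ} (x : Site d) (ε : Dir d) :
    nsq (x + dirVec d ε) - nsq x = 2 * (if ε.2 then (x ε.1 : ℝ) else -(x ε.1 : ℝ)) + 1 := by
  obtain ⟨i, b⟩ := ε
  simp only [nsq, ← Finset.sum_sub_distrib]
  rw [Finset.sum_eq_single i]
  · cases b <;> simp [dirVec, unitVec] <;> ring
  · intro j _ hj
    cases b <;> simp [dirVec, unitVec, hj]
  · simp

lemma nsq_lap {d : ℕ} (hd : 1 ≤ d) (x : Site d) :
    (1 / (2 * (d : ℝ))) * ∑ ε : Dir d, (nsq (x + dirVec d ε) - nsq x) = 1 := by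
  have hd0 : (0 : ℝ) < d := by exact_mod_cast hd
  simp only [nsq_step]
  rw [Fintype.sum_prod_type]
  have : ∀ i : Fin d, ∑ b : Bool, (2 * (if b then (x i : ℝ) else -(x i : ℝ)) + 1) = 2 := by
    intro i
    simp
    ring
  simp only [this, Finset.sum_const, Finset.card_univ, Fintype.card_fin, nsmul_eq_mul]
  field_simp

lemma nsq_grad {d : ℕ} (x : Site d) :
    ∑ ε : Dir d, (nsq (x + dirVec d ε) - nsq x) ^ 2 ≤ 16 * nsq x + 4 * d := by
  simp only [nsq_step]
  rw [Fintype.sum_prod_type]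
  have : 16 * nsq x + 4 * d = ∑ i : Fin d, (16 * (x i : ℝ) ^ 2 + 4) := by
    rw [Finset.sum_add_distrib, nsq, Finset.mul_sum]
    simp [mul_comm]
  rw [this]
  refine Finset.sum_le_sum fun i _ => ?_
  simp
  nlinarith [sq_nonneg (x i : ℝ)]
theorem lemma_bootstrapping (d : ℕ) (hd : 1 ≤ d) (c α β : ℝ) (hα : 1 ≤ α)
    (hβ : 1 + 2 / (d : ℝ) ≤ β) (hc : 0 < c) :
    ∃ c' : ℝ, ∀ (D : ℝ), 1 ≤ D → ∀ r : Site d → ℕ → Dir d, HasDiscrepancy d D r →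
      (∀ n : ℕ, 1 ≤ n → psi (aggRegion r n) ≤ c * D ^ α * (n : ℝ) ^ β) →
      ∀ n : ℕ, 1 ≤ n →
        psi (aggRegion r n)
          ≤ c' * (D ^ (1 + α / 2) * (n : ℝ) ^ ((1 + β) / 2) + (n : ℝ) ^ (1 + 2 / (d : ℝ))) := by
  have hd0 : (0 : ℝ) < d := by exact_mod_cast hd
  refine ⟨Real.sqrt (2 * d * (16 * c + 4 * d)) + 2 * Real.sqrt (40 * (d : ℝ) ^ 3) + 10 * d, ?_⟩
  intro D hD r hr hyp n hn
  have hψ := hyp n hn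
  obtain ⟨N, rfl⟩ : ∃ N, n = N + 1 := ⟨n - 1, by omega⟩
  obtain ⟨B, hB, hcard, hsum⟩ := agg_finset r N
  have hreg : aggRegion r (N + 1) = (B : Set (Site d)) := by
    rw [hB]; rfl
  have hpsi : psi (aggRegion r (N + 1)) = ∑ x ∈ B, nsq x := by
    rw [hreg, psi, finsum_mem_coe_finset]
  rw [hpsi] at hψ ⊢
  set n := N + 1 with hndef
  have hn1 : (1 : ℝ) ≤ n := by exact_mod_cast hn
  have hn0 : (0 : ℝ) < n := by linarith
  have hD0 : 0 < D := by linarith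
  set R : ℝ := (n : ℝ) ^ (2 / (d : ℝ)) with hR
  have hR0 : 0 ≤ R := by positivity
  have hnR : (n : ℝ) ^ (1 + 2 / (d : ℝ)) = n * R := by
    rw [Real.rpow_add hn0, Real.rpow_one]
  have hnRβ : n * R ≤ (n : ℝ) ^ β := by
    rw [← hnR]
    exact Real.rpow_le_rpow_of_exponent_le hn1 hβ
  have hnβ : (n : ℝ) ≤ (n : ℝ) ^ β := by
    have : (n : ℝ) ^ (1 : ℝ) ≤ (n : ℝ) ^ β := by
      apply Real.rpow_le_rpow_of_exponent_le hn1
      have : 0 ≤ 2 / (d : ℝ) := by positivity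
      linarith
    rwa [Real.rpow_one] at this
  have hDα : 1 ≤ D ^ α := Real.one_le_rpow hD (by linarith)
  obtain ⟨Y, hY⟩ : ∃ Y, Y = D ^ (α / 2) * (n : ℝ) ^ ((1 + β) / 2) := ⟨_, rfl⟩
  have hY0 : 0 ≤ Y := by rw [hY]; positivity
  have hX : D ^ (1 + α / 2) * (n : ℝ) ^ ((1 + β) / 2) = D * Y := by
    rw [hY, Real.rpow_add hD0, Real.rpow_one]; ring
  have hY2 : Y ^ 2 = D ^ α * (n * (n : ℝ) ^ β) := by
    rw [hY, mul_pow, ← Real.rpow_natCast, ← Real.rpow_natCast, ← Real.rpow_mul hD0.le,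
      ← Real.rpow_mul hn0.le]
    have e1 : α / 2 * ((2 : ℕ) : ℝ) = α := by push_cast; ring
    have e2 : (1 + β) / 2 * ((2 : ℕ) : ℝ) = 1 + β := by push_cast; ring
    rw [e1, e2, Real.rpow_add hn0, Real.rpow_one]
  have hle : ∀ z : ℝ, z ≤ (n : ℝ) ^ β → n * z ≤ Y ^ 2 := by
    intro z hz
    rw [hY2]
    have h1 : n * z ≤ n * (n : ℝ) ^ β := by gcongr
    have h2 : 0 ≤ n * (n : ℝ) ^ β := by positivity
    nlinarith
  have hnn := hle n hnβ
  have hnnR := hle (n * R) hnRβ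
  have hnψ : n * ∑ x ∈ B, nsq x ≤ c * Y ^ 2 := by
    rw [hY2]
    calc n * ∑ x ∈ B, nsq x ≤ n * (c * D ^ α * (n : ℝ) ^ β) := by gcongr
      _ = _ := by ring
  set u := (aggState r N).2.1 with hu
  set T : ℝ := ∑ x ∈ B, (u x : ℝ) with hT
  -- first application: the squared norm
  have a1 := gsum_agg r nsq B N hB N le_rfl
  have h0 : nsq (0 : Site d) = 0 := by simp [nsq]
  simp only [h0, sub_zero] at a1
  rw [← hsum] at a1
  have b1 := gsum_bound hD hr nsq B u
  simp only [nsq_lap hd, mul_one] at b1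
  rw [a1] at b1
  have g1 : ∑ x ∈ B, ∑ ε : Dir d, (nsq (x + dirVec d ε) - nsq x) ^ 2
      ≤ 16 * (∑ x ∈ B, nsq x) + 4 * d * n := by
    refine (Finset.sum_le_sum fun x _ => nsq_grad x).trans ?_
    rw [Finset.sum_add_distrib, ← Finset.mul_sum, Finset.sum_const, nsmul_eq_mul]
    have : (B.card : ℝ) ≤ n := by exact_mod_cast hcard
    nlinarith
  have c1 := cs_bound B n hcard (fun x ε => nsq (x + dirVec d ε) - nsq x) _ g1
  have s1 : Real.sqrt (2 * d * n * (16 * (∑ x ∈ B, nsq x) + 4 * d * n))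
      ≤ Real.sqrt (2 * d * (16 * c + 4 * d)) * Y := by
    rw [← Real.sqrt_sq hY0, ← Real.sqrt_mul (by positivity)]
    apply Real.sqrt_le_sqrt
    have : 2 * (d : ℝ) * n * (16 * (∑ x ∈ B, nsq x) + 4 * d * n)
        = 2 * d * (16 * (n * ∑ x ∈ B, nsq x) + 4 * d * (n * n)) := by ring
    rw [this]
    calc _ ≤ 2 * (d : ℝ) * (16 * (c * Y ^ 2) + 4 * d * Y ^ 2) := by gcongr
      _ = _ := by ring
  have r1 : ∑ x ∈ B, nsq x ≤ T + D * (Real.sqrt (2 * d * (16 * c + 4 * d)) * Y) := by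
    have := (abs_le.mp b1).2
    have h3 := mul_le_mul_of_nonneg_left (c1.trans s1) hD0.le
    linarith
  -- second application: the test function
  obtain ⟨f, f0, fle, flap, fE⟩ := exists_test d hd n hn B hcard
  have a2 := gsum_agg r f B N hB N le_rfl
  have b2 := gsum_bound hD hr f B u
  have c2 := cs_bound B n hcard (fun x ε => f (x + dirVec d ε) - f x) _ fE
  have s2 : Real.sqrt (2 * d * n * (4 * d * (n * (5 * d * R))))
      ≤ Real.sqrt (40 * (d : ℝ) ^ 3) * Y := by
    rw [← Real.sqrt_sq hY0, ← Real.sqrt_mul (by positivity)]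
    apply Real.sqrt_le_sqrt
    calc _ = 40 * (d : ℝ) ^ 3 * (n * (n * R)) := by ring
      _ ≤ _ := by gcongr
  have low : -(n * (5 * d * R)) ≤ gsum r f B u := by
    rw [a2]
    have : ∑ k ∈ Finset.range N, (-(5 * d * R)) ≤ ∑ k ∈ Finset.range N, (f (stopSite r k) - f 0) :=
      Finset.sum_le_sum fun k _ => by linarith [f0 (stopSite r k), fle 0]
    refine le_trans ?_ this
    rw [Finset.sum_const, Finset.card_range, nsmul_eq_mul]
    have hNn : (n : ℝ) = N + 1 := by rw [hndef]; push_cast; ring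
    have : 0 ≤ 5 * d * R := by positivity
    rw [hNn]
    linarith
  have up : ∑ x ∈ B, (u x : ℝ) * ((1 / (2 * (d : ℝ))) * ∑ ε : Dir d, (f (x + dirVec d ε) - f x))
      ≤ -(1 / 2) * T := by
    rw [hT, Finset.mul_sum]
    refine Finset.sum_le_sum fun x hx => ?_
    rw [mul_comm (-(1 / 2) : ℝ)]
    exact mul_le_mul_of_nonneg_left (flap x hx) (by positivity)
  have r2 : T ≤ 10 * d * (n * R) + 2 * (D * (Real.sqrt (40 * (d : ℝ) ^ 3) * Y)) := by
    have := (abs_le.mp b2).2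
    have h3 := mul_le_mul_of_nonneg_left (c2.trans s2) hD0.le
    linarith
  rw [hX, hnR]
  have p1 : 0 ≤ Real.sqrt (2 * d * (16 * c + 4 * d)) := Real.sqrt_nonneg _
  have p2 : 0 ≤ Real.sqrt (40 * (d : ℝ) ^ 3) := Real.sqrt_nonneg _
  have p3 : 0 ≤ D * Y := by positivity
  have p4 : 0 ≤ n * R := by positivity
  have q1 := mul_nonneg p1 p4
  have q2 := mul_nonneg p2 p4
  have q3 := mul_nonneg hd0.le p3
  linarith

end RotorRouterPaper
end
end

section
/- In dimension d = 2 there exist constants a, c > 0 such that for all integers k, r with 1 ≤ k ≤ r and r − a log r > 0, p(k, r) ≤ c ((k + a log r)/(r − a log r))^{2/3}. -/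
open scoped BigOperators Pointwise symmDiff
open MeasureTheory Filter

noncomputable section
open scoped Classical
namespace RotorRouterPaper

section Helpers
open Complex
theorem an_lemma (f : ℂ → ℂ) (hf : AnalyticAt ℂ f 0) : ∃ C δ : ℝ, 0 < C ∧ 0 < δ ∧ ∀ a : ℂ, ‖a‖ < δ →
   ‖f a + f (-a) + f (I*a) + f (-(I*a)) - 4 * f 0‖ ≤ C * ‖a‖^3 := by
  obtain ⟨p, hp⟩ := hf
  obtain ⟨C, hC, hO⟩ := (hp.isBigO_sub_partialSum_pow 3).exists_pos
  rw [Asymptotics.isBigOWith_iff, Metric.eventually_nhds_iff] at hO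
  obtain ⟨δ, hδ, H⟩ := hO
  refine ⟨4*C, δ, by positivity, hδ, fun a ha => ?_⟩
  have key : ∀ b : ℂ, ‖b‖ = ‖a‖ → ‖f b - (p.coeff 0 + b * p.coeff 1 + b^2 * p.coeff 2)‖ ≤ C * ‖a‖^3 := by
    intro b hb
    have := H (y := b) (by simpa [hb] using ha)
    simpa [FormalMultilinearSeries.partialSum, Finset.sum_range_succ, hb] using this
  have h0 : f 0 = p.coeff 0 := by
    have := H (y := 0) (by simpa using hδ)
    simp [FormalMultilinearSeries.partialSum, Finset.sum_range_succ] at this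
    exact sub_eq_zero.mp this
  have h1 := key a rfl
  have h2 := key (-a) (by simp)
  have h3 := key (I*a) (by simp)
  have h4 := key (-(I*a)) (by simp)
  have e : f a + f (-a) + f (I*a) + f (-(I*a)) - 4 * f 0 = 
    (f a - (p.coeff 0 + a * p.coeff 1 + a^2 * p.coeff 2)) + (f (-a) - (p.coeff 0 + (-a) * p.coeff 1 + (-a)^2 * p.coeff 2)) + (f (I*a) - (p.coeff 0 + (I*a) * p.coeff 1 + (I*a)^2 * p.coeff 2)) + (f (-(I*a)) - (p.coeff 0 + (-(I*a)) * p.coeff 1 + (-(I*a))^2 * p.coeff 2)) := by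
    rw [h0]; ring_nf; rw [I_sq]; ring
  rw [e]
  refine (norm_add_le _ _).trans ?_
  refine (add_le_add_left (norm_add₃_le) _).trans ?_
  linarith

/-- max principle -/
theorem max_pr (A : Finset (ℤ × ℤ)) (g : ℤ → ℤ → ℝ)
    (hA : ∀ x y, (x,y) ∈ A → 4 * g x y ≤ g (x+1) y + g (x-1) y + g x (y+1) + g x (y-1))
    (hb : ∀ x y, (x,y) ∈ A → ∀ x' y', (x',y') ∉ A → |x'-x| + |y'-y| = 1 → g x' y' ≤ 0) :
    ∀ x y, (x,y) ∈ A → g x y ≤ 0 := by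
  intro x y hxy
  by_contra! hpos
  obtain ⟨p, hpA, hp⟩ := A.exists_max_image (fun q => g q.1 q.2) ⟨_, hxy⟩
  set M := g p.1 p.2 with hM
  have hMpos : 0 < M := hpos.trans_le (hp (x,y) hxy)
  obtain ⟨q, hq, hqm⟩ := (A.filter (fun q => g q.1 q.2 = M)).exists_max_image (fun q => q.1)
    ⟨p, by simp [hpA, hM]⟩
  rw [Finset.mem_filter] at hq
  have nb : ∀ x' y', |x'-q.1| + |y'-q.2| = 1 → g x' y' ≤ M := by
    intro x' y' h
    by_cases hm : (x',y') ∈ A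
    · exact hp _ hm
    · exact (hb q.1 q.2 hq.1 x' y' hm h).trans hMpos.le
  have h1 := nb (q.1+1) q.2 (by simp)
  have h2 := nb (q.1-1) q.2 (by simp)
  have h3 := nb (q.1) (q.2+1) (by simp)
  have h4 := nb (q.1) (q.2-1) (by simp)
  have h5 := hA q.1 q.2 hq.1
  rw [hq.2] at h5
  have h6 : g (q.1+1) q.2 = M := by linarith
  have hm : (q.1+1, q.2) ∈ A := by
    by_contra hm
    have := hb q.1 q.2 hq.1 _ _ hm (by simp)
    linarith
  have := hqm (q.1+1,q.2) (by simp [hm, h6])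
  simp at this

theorem wedge (z : ℂ) (hz : z ≠ 0) (h : 0 ≤ z.re + |z.im|) :
    |z.arg| ≤ 3 * Real.pi / 4 ∧
    (4 / (3 * Real.pi) * (√2 / 2)) * ((z.re + |z.im|) * ‖z‖ ^ (-(1/3) : ℝ)) ≤ (z ^ ((2/3 : ℝ) : ℂ)).re := by
  have hn : 0 < ‖z‖ := norm_pos_iff.mpr hz
  have hpi := Real.pi_pos
  have hs : ‖z‖ * Real.sin (3 * Real.pi / 4 - |z.arg|) = (z.re + |z.im|) * (√2 / 2) := by
    have e : 3 * Real.pi / 4 = Real.pi - Real.pi / 4 := by ring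
    have h1 : Real.sin (3 * Real.pi / 4) = √2/2 := by rw [e, Real.sin_pi_sub, Real.sin_pi_div_four]
    have h2 : Real.cos (3 * Real.pi / 4) = -(√2/2) := by rw [e, Real.cos_pi_sub, Real.cos_pi_div_four]
    rw [Real.sin_sub, h1, h2, Real.cos_abs]
    have h3 : ‖z‖ * Real.sin |z.arg| = |z.im| := by
      rw [← norm_mul_sin_arg z, abs_mul, abs_norm, ← Real.abs_sin_eq_sin_abs_of_abs_le_pi (abs_arg_le_pi z)]
    rw [← norm_mul_cos_arg z, ← h3]; ring
  have hle : |z.arg| ≤ 3 * Real.pi / 4 := by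
    by_contra! hc
    have h1 := abs_arg_le_pi z
    have := Real.sin_neg_of_neg_of_neg_pi_lt (x := 3 * Real.pi / 4 - |z.arg|) (by linarith) (by linarith)
    have h2 := mul_neg_of_pos_of_neg hn this
    rw [hs] at h2
    have : 0 ≤ (z.re + |z.im|) * (√2 / 2) := by positivity
    linarith
  refine ⟨hle, ?_⟩
  have hre : (z ^ ((2/3 : ℝ) : ℂ)).re = ‖z‖ ^ (2/3:ℝ) * Real.cos (2/3 * |z.arg|) := by
    have := cpow_ofReal_re z (2/3)
    rw [this, ← Real.cos_abs (z.arg * _), abs_mul, abs_of_pos (by norm_num : (0:ℝ) < 2/3), mul_comm |z.arg|]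
  have hcos := Real.one_sub_mul_le_cos (x := 2/3 * |z.arg|) (by positivity) (by linarith)
  have hsin := Real.sin_le (x := 3 * Real.pi / 4 - |z.arg|) (by linarith)
  have hc2 : 4 / (3 * Real.pi) * Real.sin (3 * Real.pi / 4 - |z.arg|) ≤ Real.cos (2/3 * |z.arg|) := by
    refine (mul_le_mul_of_nonneg_left hsin (by positivity)).trans (le_trans (le_of_eq ?_) hcos)
    field_simp; ring
  rw [hre]
  have hp : ‖z‖ ^ (2/3:ℝ) = ‖z‖ ^ (-(1/3) : ℝ) * ‖z‖ := by
    rw [← Real.rpow_add_one hn.ne']; norm_num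
  calc _ = ‖z‖ ^ (-(1/3) : ℝ) * (4 / (3 * Real.pi) * ((z.re + |z.im|) * (√2 / 2))) := by ring
    _ = ‖z‖ ^ (2/3:ℝ) * (4 / (3 * Real.pi) * Real.sin (3 * Real.pi / 4 - |z.arg|)) := by rw [← hs, hp]; ring
    _ ≤ _ := mul_le_mul_of_nonneg_left hc2 (by positivity)

theorem log_small (b : ℂ) (hb : ‖b‖ ≤ 1/8) : ‖log (1+b) - b‖ ≤ ‖b‖^2 := by
  refine (norm_log_one_add_sub_self_le (by linarith)).trans ?_
  have : (1-‖b‖)⁻¹ ≤ 2 := by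
    rw [inv_le_comm₀ (by linarith) (by norm_num)]; linarith
  nlinarith [sq_nonneg ‖b‖]

theorem log_mul' (z b : ℂ) (hz : z ≠ 0) (ha : |z.arg| ≤ 3 * Real.pi / 4) (hb : ‖b‖ ≤ 1/8) :
    1 + b ≠ 0 ∧ log (z * (1+b)) = log z + log (1+b) := by
  have h0 : 1 + b ≠ 0 := by
    intro h
    have : b = -1 := by linear_combination h
    rw [this] at hb; norm_num at hb
  refine ⟨h0, Complex.log_mul hz h0 ?_⟩
  have h1 := log_small b hb
  have h2 : |(1+b).arg| ≤ ‖log (1+b)‖ := by rw [← log_im]; exact abs_im_le_norm _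
  have h3 : ‖log (1+b)‖ ≤ ‖log (1+b) - b‖ + ‖b‖ := by
    simpa using norm_add_le (log (1+b) - b) b
  have := Real.pi_gt_three
  have h4 : |(1+b).arg| ≤ 1/4 := by nlinarith [norm_nonneg b]
  rw [abs_le] at ha h4
  constructor <;> linarith

theorem im_sq (b : ℂ) (hb : ‖b‖ ≤ 1/8) : b.im^2 - 2 * ‖b‖^3 ≤ (log (1+b)).im^2 := by
  have h1 := (abs_im_le_norm _).trans (log_small b hb)
  rw [sub_im, abs_le] at h1
  have h2 := abs_le.mp (abs_im_le_norm b)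
  set d := (log (1+b)).im
  have h4 : (d - b.im) * b.im ≥ - (‖b‖^2 * ‖b‖) := by
    have : |(d - b.im) * b.im| ≤ ‖b‖^2 * ‖b‖ := by
      rw [abs_mul]; exact mul_le_mul (abs_le.mpr h1) (abs_le.mpr h2) (abs_nonneg _) (by positivity)
    exact (abs_le.mp this).1
  nlinarith [sq_nonneg (d - b.im)]

/-- the local supersolution -/
theorem supersol : ∃ K m : ℝ, 0 < K ∧ 1 ≤ m ∧ ∀ z a : ℂ, 1 ≤ ‖z‖ → ‖z‖ * ‖a‖ ≤ 2 → 
    m * ‖a‖ ≤ 1 → |z.arg| ≤ 3 * Real.pi / 4 → 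
    ∀ W : ℂ → ℝ, (W = fun z => (z ^ ((2/3 : ℝ) : ℂ)).re + K * (Real.pi^2 - z.arg^2)) → 
    W (z * (1 + a)) + W (z * (1 + -a)) + W (z * (1 + I*a)) + W (z * (1 + -(I*a))) ≤ 4 * W z := by
  obtain ⟨C1, d1, hC1, hd1, H1⟩ := an_lemma (fun w => (1+w) ^ ((2/3 : ℝ) : ℂ)) 
    (AnalyticAt.cpow (by fun_prop) (by fun_prop) (by simp))
  obtain ⟨C2, d2, hC2, hd2, H2⟩ := an_lemma (fun w => log (1+w)) 
    (AnalyticAt.clog (by fun_prop) (by simp))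
  have hpi := Real.pi_pos
  refine ⟨4 * C1, 8 + 2/d1 + 2/d2 + 4 * Real.pi * C2, by positivity, ?_, ?_⟩
  · have : 0 ≤ 2/d1 + 2/d2 + 4 * Real.pi * C2 := by positivity
    linarith
  intro z a hz hza hma harg W hW
  have hz0 : z ≠ 0 := norm_pos_iff.mp (by linarith)
  have hn := norm_nonneg a
  have t1 : 0 ≤ 2/d1 * ‖a‖ := by positivity
  have t2 : 0 ≤ 2/d2 * ‖a‖ := by positivity
  have t3 : 0 ≤ 4 * Real.pi * C2 * ‖a‖ := by positivity
  have ha8 : ‖a‖ ≤ 1/8 := by linarith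
  have ha1 : ‖a‖ < d1 := by
    have : 2/d1 * ‖a‖ ≤ 1 := by linarith
    rw [div_mul_eq_mul_div, div_le_one hd1] at this
    linarith
  have ha2 : ‖a‖ < d2 := by
    have : 2/d2 * ‖a‖ ≤ 1 := by linarith
    rw [div_mul_eq_mul_div, div_le_one hd2] at this
    linarith
  have ha3 : 4 * Real.pi * C2 * ‖a‖ ≤ 1 := by linarith
  have H1 := H1 a ha1
  have H2 := H2 a ha2
  simp only [add_zero, one_cpow, log_one, mul_zero, sub_zero, mul_one] at H1 H2
  have key : ∀ b : ℂ, ‖b‖ = ‖a‖ → W (z * (1+b)) = (z ^ ((2/3 : ℝ) : ℂ) * (1+b) ^ ((2/3 : ℝ) : ℂ)).re + 4 * C1 * (Real.pi^2 - (z.arg + (log (1+b)).im)^2) := by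
    intro b hb
    obtain ⟨hb0, hl⟩ := log_mul' z b hz0 harg (by rw [hb]; exact ha8)
    rw [hW]
    simp only
    rw [← log_im, hl, add_im, log_im]
    congr 2
    rw [cpow_def_of_ne_zero (mul_ne_zero hz0 hb0), hl, cpow_def_of_ne_zero hz0, cpow_def_of_ne_zero hb0, ← exp_add]
    ring_nf
  rw [key a rfl, key (-a) (by simp), key (I*a) (by simp), key (-(I*a)) (by simp)]
  have i1 := im_sq a ha8
  have i2 := im_sq (-a) (by simpa using ha8)
  have i3 := im_sq (I*a) (by simpa using ha8)
  have i4 := im_sq (-(I*a)) (by simpa using ha8)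
  simp only [norm_neg, norm_mul, norm_I, one_mul, neg_im, I_mul_im] at i1 i2 i3 i4
  have hsq : a.re^2 + a.im^2 = ‖a‖^2 := by rw [← normSq_eq_norm_sq, normSq_apply]; ring
  have H1' : (z ^ ((2/3 : ℝ) : ℂ) * ((1 + a) ^ ((2/3 : ℝ) : ℂ) + (1 + -a) ^ ((2/3 : ℝ) : ℂ) + (1 + I * a) ^ ((2/3 : ℝ) : ℂ) + (1 + -(I * a)) ^ ((2/3 : ℝ) : ℂ) - 4)).re ≤ 2 * C1 * ‖a‖^2 := by
    refine (re_le_norm _).trans ?_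
    rw [norm_mul]
    have : ‖z ^ ((2/3 : ℝ) : ℂ)‖ ≤ ‖z‖ := by
      rw [norm_cpow_real]
      calc ‖z‖ ^ (2/3:ℝ) ≤ ‖z‖ ^ (1:ℝ) := Real.rpow_le_rpow_of_exponent_le hz (by norm_num)
        _ = ‖z‖ := Real.rpow_one _
    calc _ ≤ ‖z‖ * (C1 * ‖a‖^3) := mul_le_mul this H1 (norm_nonneg _) (norm_nonneg _)
      _ = (‖z‖ * ‖a‖) * (C1 * ‖a‖^2) := by ring
      _ ≤ 2 * (C1 * ‖a‖^2) := mul_le_mul_of_nonneg_right hza (by positivity)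
      _ = _ := by ring
  have H2' := (abs_im_le_norm _).trans H2
  simp only [add_im] at H2'
  set l1 := (log (1+a)).im
  set l2 := (log (1+-a)).im
  set l3 := (log (1+I*a)).im
  set l4 := (log (1+-(I*a))).im
  have H3 : |2 * z.arg * (l1+l2+l3+l4)| ≤ ‖a‖^2 / 2 := by
    rw [abs_mul, abs_mul, abs_two]
    have : |z.arg| ≤ Real.pi := abs_arg_le_pi z
    calc _ ≤ 2 * Real.pi * (C2 * ‖a‖^3) := by gcongr
      _ = (4 * Real.pi * C2 * ‖a‖) * (‖a‖^2/2) := by ring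
      _ ≤ 1 * (‖a‖^2/2) := mul_le_mul_of_nonneg_right ha3 (by positivity)
      _ = _ := by ring
  have H4 : ‖a‖^2 ≤ l1^2+l2^2+l3^2+l4^2 := by
    have : ‖a‖^3 ≤ ‖a‖^2 * (1/8) := by rw [pow_succ]; gcongr
    nlinarith
  have H5 : ‖a‖^2/2 ≤ 2 * z.arg * (l1+l2+l3+l4) + (l1^2+l2^2+l3^2+l4^2) := by
    linarith [(abs_le.mp H3).1]
  have H6 := mul_le_mul_of_nonneg_left H5 (by positivity : 0 ≤ 4 * C1)
  have e : W z = (z ^ ((2/3 : ℝ) : ℂ)).re + 4 * C1 * (Real.pi^2 - z.arg^2) := by rw [hW]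
  rw [e]
  rw [mul_sub, mul_add, mul_add, mul_add, sub_re, add_re, add_re, add_re] at H1'
  have e4 : (z ^ ((2/3 : ℝ) : ℂ) * 4).re = 4 * (z ^ ((2/3 : ℝ) : ℂ)).re := by
    simp; ring
  rw [e4] at H1'
  nlinarith

def Hyp (r : ℕ) (H : ℤ → ℤ → ℝ) : Prop := (∀ x y, H x y ≤ 1) ∧ (∀ x y, 0 ≤ x → 0 ≤ y → H x y = 0) ∧
  ∀ x y : ℤ, |x| ≤ (r:ℤ) → |y| ≤ (r:ℤ) → (x < 0 ∨ y < 0) → 4 * H x y = H (x+1) y + H (x-1) y + H x (y+1) + H x (y-1)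

theorem lin_bound (r N : ℕ) (hN : 1 ≤ N) (hr : 2 * N ≤ r) (H : ℤ → ℤ → ℝ) (hH : Hyp r H) (s : ℕ) :
    H (-s) N ≤ 2 * s / N := by
  obtain ⟨h1, h2, h3⟩ := hH
  have hN0 : (0:ℝ) < N := by exact_mod_cast hN
  rcases Nat.eq_zero_or_pos s with rfl | hs
  · simpa using (h2 0 N le_rfl (by positivity)).le
  rcases le_or_gt N s with hsN | hsN
  · refine (h1 _ _).trans ?_
    rw [le_div_iff₀ hN0]
    have : (N:ℝ) ≤ s := by exact_mod_cast hsN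
    linarith
  let f : ℤ → ℤ → ℝ := fun x y => (2 * (-x) * N - x^2 + (y-N)^2) / N^2
  have := max_pr ((Finset.Icc (-(N:ℤ)+1) (-1)) ×ˢ (Finset.Icc 1 (2*(N:ℤ)-1))) (fun x y => H x y - f x y) ?_ ?_ (-s) N ?_
  · have e : f (-s) N ≤ 2 * s / N := by
      simp only [f]
      rw [div_le_div_iff₀ (by positivity) hN0]
      push_cast
      have : (0:ℝ) ≤ s^2 * N := by positivity
      nlinarith
    linarith
  · intro x y hxy
    simp only [Finset.mem_product, Finset.mem_Icc] at hxy
    have := h3 x y (by rw [abs_le]; omega) (by rw [abs_le]; omega) (by omega)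
    have e : 4 * f x y = f (x+1) y + f (x-1) y + f x (y+1) + f x (y-1) := by
      simp only [f]; push_cast; field_simp; ring
    linarith
  · intro x y hxy x' y' hn hd
    simp only [Finset.mem_product, Finset.mem_Icc] at hxy hn
    have hN2 : (0:ℝ) < N^2 := by positivity
    have hx : -(N:ℤ) ≤ x' ∧ x' ≤ 0 ∧ 0 ≤ y' ∧ y' ≤ 2 * N ∧ (x' = 0 ∨ x' = -N ∨ y' = 0 ∨ y' = 2*N) := by
      have a1 := abs_le.mp (show |x'-x| ≤ 1 by have := abs_nonneg (y'-y); omega)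
      have a2 := abs_le.mp (show |y'-y| ≤ 1 by have := abs_nonneg (x'-x); omega)
      omega
    obtain ⟨b1, b2, b3, b4, b5⟩ := hx
    have b1' : -(N:ℝ) ≤ x' := by exact_mod_cast b1
    have b2' : (x':ℝ) ≤ 0 := by exact_mod_cast b2
    rw [sub_nonpos]
    rcases b5 with b | b | b | b
    · rw [h2 x' y' (by omega) b3]
      subst b
      simp only [f]; push_cast
      apply div_nonneg _ hN2.le
      nlinarith [sq_nonneg ((y':ℝ) - N)]
    all_goals
      refine (h1 _ _).trans ?_
      simp only [f]
      rw [le_div_iff₀ hN2]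
      subst b
      push_cast
    · nlinarith [sq_nonneg ((y':ℝ) - N)]
    · nlinarith
    · nlinarith
  · simp only [Finset.mem_product, Finset.mem_Icc]; omega

theorem barrier : ∃ c1 c2 : ℝ, 0 < c1 ∧ 0 < c2 ∧ ∃ W : ℤ → ℤ → ℝ,
    (∀ x y : ℤ, (x < 0 ∨ y < 0) → W (x+1) y + W (x-1) y + W x (y+1) + W x (y-1) ≤ 4 * W x y) ∧
    (∀ (N s : ℕ) (x y : ℤ), 1 ≤ N → |x| ≤ (N:ℤ) → |y| ≤ (N:ℤ) → (x ≤ -(s:ℤ) ∨ y ≤ -(s:ℤ)) →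
      c1 * s * (N:ℝ) ^ (-(1/3):ℝ) ≤ W x y) ∧
    (∀ (k : ℕ) (x y : ℤ), 1 ≤ k → |x| ≤ (k:ℤ) → |y| ≤ (k:ℤ) → W x y ≤ c2 * (k:ℝ) ^ (2/3:ℝ)) := by
  obtain ⟨K, m, hK, hm, hS⟩ := supersol
  obtain ⟨M, hM⟩ := exists_nat_ge m
  have hM1 : (1:ℝ) ≤ M := hm.trans hM
  let Z : ℤ → ℤ → ℂ := fun x y => ⟨(x:ℝ) - M, (y:ℝ) - M⟩
  let V : ℂ → ℝ := fun z => (z ^ ((2/3 : ℝ) : ℂ)).re + K * (Real.pi^2 - z.arg^2)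
  have hVU : ∀ z, (z ^ ((2/3 : ℝ) : ℂ)).re ≤ V z := by
    intro z
    have h1 := abs_arg_le_pi z
    have : z.arg^2 ≤ Real.pi^2 := sq_le_sq' (abs_le.mp h1).1 (abs_le.mp h1).2
    simp only [V]; nlinarith
  have hre : ∀ x y, (Z x y * (-1 + I)).re = -((x:ℝ)-M) - (y - M) := by intro x y; simp [Z]
  have him : ∀ x y, (Z x y * (-1 + I)).im = (x:ℝ) - y := by intro x y; simp [Z]
  have hw : ∀ x y : ℤ, -2 * ((x:ℝ)-M) ≤ (Z x y * (-1 + I)).re + |(Z x y * (-1 + I)).im| ∧ 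
      -2 * ((y:ℝ)-M) ≤ (Z x y * (-1 + I)).re + |(Z x y * (-1 + I)).im| := by
    intro x y
    rw [hre, him]
    constructor
    · linarith [neg_abs_le ((x:ℝ)-y)]
    · linarith [le_abs_self ((x:ℝ)-y)]
  have hZ : ∀ x y : ℤ, (x ≤ 0 ∨ y ≤ 0) → (M:ℝ) ≤ ‖Z x y‖ := by
    intro x y h
    rcases h with h | h
    · have h' : (x:ℝ) ≤ 0 := by exact_mod_cast h
      have := abs_re_le_norm (Z x y)
      have h2 := neg_abs_le (Z x y).re
      simp only [Z] at this h2 ⊢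
      linarith
    · have h' : (y:ℝ) ≤ 0 := by exact_mod_cast h
      have := abs_im_le_norm (Z x y)
      have h2 := neg_abs_le (Z x y).im
      simp only [Z] at this h2 ⊢
      linarith
  have hn2 : ‖(-1 + I : ℂ)‖ = √2 := by
    rw [norm_def, normSq_apply]; norm_num
  have hs2 : √2 ≤ 2 := by rw [Real.sqrt_le_left (by norm_num)]; norm_num
  have hs1 : 1 ≤ √2 := by rw [Real.one_le_sqrt]; norm_num
  have hup : ∀ (N : ℕ) (x y : ℤ), 1 ≤ N → |x| ≤ (N:ℤ) → |y| ≤ (N:ℤ) → ‖Z x y * (-1 + I)‖ ≤ 4 * (1+M) * N := by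
    intro N x y hN hx hy
    have hN' : (1:ℝ) ≤ N := by exact_mod_cast hN
    have hx' : |(x:ℝ)| ≤ N := by exact_mod_cast hx
    have hy' : |(y:ℝ)| ≤ N := by exact_mod_cast hy
    rw [norm_mul, hn2]
    have h1 : ‖Z x y‖ ≤ |(x:ℝ)-M| + |(y:ℝ)-M| := norm_le_abs_re_add_abs_im _
    have h2 : |(x:ℝ)-M| ≤ N + M := by rw [abs_le] at hx' ⊢; constructor <;> linarith
    have h3 : |(y:ℝ)-M| ≤ N + M := by rw [abs_le] at hy' ⊢; constructor <;> linarith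
    have h4 : ‖Z x y‖ * √2 ≤ (2*(N+M)) * 2 := mul_le_mul (by linarith) hs2 (by positivity) (by positivity)
    nlinarith
  have hpi := Real.pi_pos
  refine ⟨4 / (3 * Real.pi) * (√2 / 2) * 2 * (4 * (1+M:ℝ)) ^ (-(1/3):ℝ), (4 * (1+M:ℝ)) ^ (2/3:ℝ) + K * Real.pi^2, by positivity, by positivity,
    fun x y => V (Z x y * (-1 + I)), ?_, ?_, ?_⟩
  · intro x y hxy
    have hz := hZ x y (by omega)
    have hz0 : Z x y ≠ 0 := norm_pos_iff.mp (by linarith)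
    have hzn : ‖Z x y‖ ≠ 0 := norm_ne_zero_iff.mpr hz0
    have hI : (-1 + I : ℂ) ≠ 0 := by
      intro h; rw [h, norm_zero] at hn2; linarith
    have h := hS (Z x y * (-1 + I)) (Z x y)⁻¹ (by rw [norm_mul, hn2]; nlinarith)
      (by rw [norm_mul, hn2, norm_inv]; field_simp; linarith) 
      (by rw [norm_inv, ← div_eq_mul_inv, div_le_one (by linarith)]; linarith) 
      (wedge _ (mul_ne_zero hz0 hI) (by
        have := hw x y
        rcases hxy with h | h
        · have : (x:ℝ) < 0 := by exact_mod_cast h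
          linarith
        · have : (y:ℝ) < 0 := by exact_mod_cast h
          linarith)).1 V rfl
    have e1 : Z x y * (-1 + I) * (1 + (Z x y)⁻¹) = Z (x+1) y * (-1+I) := by
      have : Z (x+1) y = Z x y + 1 := by apply Complex.ext <;> simp [Z]; ring
      rw [this]; field_simp
    have e2 : Z x y * (-1 + I) * (1 + -(Z x y)⁻¹) = Z (x-1) y * (-1+I) := by
      have : Z (x-1) y = Z x y - 1 := by apply Complex.ext <;> simp [Z]; ring
      rw [this]; field_simp; ring
    have e3 : Z x y * (-1 + I) * (1 + I * (Z x y)⁻¹) = Z x (y+1) * (-1+I) := by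
      have : Z x (y+1) = Z x y + I := by apply Complex.ext <;> simp [Z]; ring
      rw [this]; field_simp
    have e4 : Z x y * (-1 + I) * (1 + -(I * (Z x y)⁻¹)) = Z x (y-1) * (-1+I) := by
      have : Z x (y-1) = Z x y - I := by apply Complex.ext <;> simp [Z]; ring
      rw [this]; field_simp; ring
    rw [e1, e2, e3, e4] at h
    exact h
  · intro N s x y hN hx hy hs
    have hs0 : (0:ℝ) ≤ s := by positivity
    have hN' : (1:ℝ) ≤ N := by exact_mod_cast hN
    have hz := hZ x y (by omega)
    have hz0 : Z x y ≠ 0 := norm_pos_iff.mp (by linarith)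
    have hI : (-1 + I : ℂ) ≠ 0 := by
      intro h; rw [h, norm_zero] at hn2; linarith
    have hge : 2 * (s:ℝ) ≤ (Z x y * (-1 + I)).re + |(Z x y * (-1 + I)).im| := by
      have := hw x y
      rcases hs with h | h
      · have : (x:ℝ) ≤ -s := by exact_mod_cast h
        linarith
      · have : (y:ℝ) ≤ -s := by exact_mod_cast h
        linarith
    have h := (wedge _ (mul_ne_zero hz0 hI) (by linarith)).2
    refine le_trans ?_ (h.trans (hVU _))
    have h1 : (4 * (1+M) * N:ℝ) ^ (-(1/3):ℝ) ≤ ‖Z x y * (-1 + I)‖ ^ (-(1/3):ℝ) :=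
      Real.rpow_le_rpow_of_nonpos (norm_pos_iff.mpr (mul_ne_zero hz0 hI)) (hup N x y hN hx hy) (by norm_num)
    rw [Real.mul_rpow (by positivity) (by positivity)] at h1
    calc _ = 4 / (3 * Real.pi) * (√2 / 2) * ((2 * s) * ((4 * (1+M:ℝ)) ^ (-(1/3):ℝ) * (N:ℝ) ^ (-(1/3):ℝ))) := by ring
      _ ≤ _ := by
        refine mul_le_mul_of_nonneg_left ?_ (by positivity)
        exact mul_le_mul hge h1 (by positivity) (by linarith)
  · intro k x y hk hx hy
    have hk' : (1:ℝ) ≤ k := by exact_mod_cast hk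
    have h1 : ((Z x y * (-1 + I)) ^ ((2/3 : ℝ) : ℂ)).re ≤ (4 * (1+M:ℝ)) ^ (2/3:ℝ) * (k:ℝ) ^ (2/3:ℝ) := by
      refine (re_le_norm _).trans ?_
      rw [norm_cpow_real, ← Real.mul_rpow (by positivity) (by positivity)]
      exact Real.rpow_le_rpow (norm_nonneg _) (hup k x y hk hx hy) (by norm_num)
    have h2 : 1 ≤ (k:ℝ) ^ (2/3:ℝ) := Real.one_le_rpow hk' (by norm_num)
    have h3 : K * (Real.pi^2 - (Z x y * (-1 + I)).arg^2) ≤ K * Real.pi^2 * (k:ℝ) ^ (2/3:ℝ) := by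
      have : 0 ≤ K * Real.pi^2 := by positivity
      nlinarith [sq_nonneg (Z x y * (-1 + I)).arg]
    simp only [V]
    linarith

theorem core : ∃ C : ℝ, 0 < C ∧ ∀ (k r : ℕ) (H : ℤ → ℤ → ℝ), 1 ≤ k → k ≤ r → Hyp r H →
    ∀ x y : ℤ, |x| ≤ (k:ℤ) → |y| ≤ (k:ℤ) → H x y ≤ C * ((k:ℝ)/r) ^ (2/3:ℝ) := by
  obtain ⟨c1, c2, hc1, hc2, W, hW1, hW2, hW3⟩ := barrier
  refine ⟨3 * (1 + 2 / c1 * c2), by positivity, ?_⟩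
  intro k r H hk hkr hH x y hx hy
  have hk' : (1:ℝ) ≤ k := by exact_mod_cast hk
  have hr' : (1:ℝ) ≤ r := by exact_mod_cast hk.trans hkr
  have hC : 0 < 2 / c1 * c2 := by positivity
  have h33 : (3:ℝ) ^ (2/3:ℝ) ≤ 3 := by
    calc (3:ℝ) ^ (2/3:ℝ) ≤ (3:ℝ)^(1:ℝ) := Real.rpow_le_rpow_of_exponent_le (by norm_num) (by norm_num)
      _ = 3 := Real.rpow_one _
  have hP : (0:ℝ) ≤ ((k:ℝ)/r) ^ (2/3:ℝ) := by positivity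
  have hmul : (3 * ((k:ℝ)/r)) ^ (2/3:ℝ) ≤ 3 * ((k:ℝ)/r) ^ (2/3:ℝ) := by
    rw [Real.mul_rpow (by norm_num) (by positivity)]; gcongr
  by_cases hbig : r ≤ 3 * k
  · have hb' : (r:ℝ) ≤ 3 * k := by exact_mod_cast hbig
    have : 1 ≤ (3 * ((k:ℝ)/r)) ^ (2/3:ℝ) := by
      apply Real.one_le_rpow _ (by norm_num)
      rw [← mul_div_assoc, le_div_iff₀ (by linarith)]; linarith
    have := hH.1 x y
    nlinarith [mul_nonneg hC.le hP]
  obtain ⟨N, hNdef⟩ : ∃ N, N = r / 2 := ⟨_, rfl⟩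
  have hN1 : 1 ≤ N := by omega
  have hN2 : 2 * N ≤ r := by omega
  have hN3 : r ≤ 3 * N := by omega
  have hkN : k < N := by omega
  have hN' : (1:ℝ) ≤ N := by exact_mod_cast hN1
  have hN3' : (r:ℝ) ≤ 3 * N := by exact_mod_cast hN3
  have hsw : Hyp r (fun x y => H y x) := 
    ⟨fun x y => hH.1 y x, fun x y hx hy => hH.2.1 y x hy hx, fun x y hx hy h => by
      rw [hH.2.2 y x hy hx (by omega)]; ring⟩
  have lin1 := lin_bound r N hN1 hN2 H hH
  have lin2 := lin_bound r N hN1 hN2 _ hsw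
  have hNp : (0:ℝ) < (N:ℝ) ^ (-(2/3):ℝ) := by positivity
  set D := 2 / c1 * (N:ℝ) ^ (-(2/3):ℝ) with hD
  have hDpos : 0 < D := by positivity
  have hDid : ∀ s : ℕ, D * (c1 * s * (N:ℝ) ^ (-(1/3):ℝ)) = 2 * s / N := by
    intro s
    have : (N:ℝ) ^ (-(2/3):ℝ) * (N:ℝ) ^ (-(1/3):ℝ) = (N:ℝ)⁻¹ := by
      rw [← Real.rpow_add (by linarith), ← Real.rpow_neg_one]; norm_num
    calc _ = (2 / c1 * c1) * s * ((N:ℝ) ^ (-(2/3):ℝ) * (N:ℝ) ^ (-(1/3):ℝ)) := by rw [hD]; ring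
      _ = _ := by rw [this]; field_simp
  have main : ∀ x y : ℤ, |x| ≤ (k:ℤ) → |y| ≤ (k:ℤ) → (x < 0 ∨ y < 0) → H x y ≤ D * W x y := by
    intro x y hx hy hneg
    rw [abs_le] at hx hy
    have := max_pr (((Finset.Icc (-(N:ℤ)+1) (N-1)) ×ˢ (Finset.Icc (-(N:ℤ)+1) (N-1))).filter (fun p => p.1 < 0 ∨ p.2 < 0)) (fun x y => H x y - D * W x y) ?_ ?_ x y ?_
    · linarith
    · intro x y hxy
      simp only [Finset.mem_filter, Finset.mem_product, Finset.mem_Icc] at hxy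
      have := hH.2.2 x y (by rw [abs_le]; omega) (by rw [abs_le]; omega) hxy.2
      have h2 := mul_le_mul_of_nonneg_left (hW1 x y hxy.2) hDpos.le
      linarith
    · intro x y hxy x' y' hn hd
      simp only [Finset.mem_filter, Finset.mem_product, Finset.mem_Icc] at hxy hn
      have a1 := abs_le.mp (show |x'-x| ≤ 1 by have := abs_nonneg (y'-y); omega)
      have a2 := abs_le.mp (show |y'-y| ≤ 1 by have := abs_nonneg (x'-x); omega)
      have a3 : x' = x ∨ y' = y := by
        by_contra! hc
        have := abs_pos.mpr (sub_ne_zero.mpr hc.1)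
        have := abs_pos.mpr (sub_ne_zero.mpr hc.2)
        omega
      rw [sub_nonpos]
      have bx : |x'| ≤ (N:ℤ) := by rw [abs_le]; omega
      have byy : |y'| ≤ (N:ℤ) := by rw [abs_le]; omega
      have fin : ∀ s : ℕ, (x' ≤ -(s:ℤ) ∨ y' ≤ -(s:ℤ)) → H x' y' ≤ 2 * s / N → H x' y' ≤ D * W x' y' := by
        intro s hs hle
        refine hle.trans ?_
        rw [← hDid s]
        exact mul_le_mul_of_nonneg_left (hW2 N s x' y' hN1 bx byy hs) hDpos.le
      by_cases hq : 0 ≤ x' ∧ 0 ≤ y'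
      · refine fin 0 (by push_cast; omega) ?_
        rw [hH.2.1 x' y' hq.1 hq.2]; simp
      by_cases hlow : x' = -N ∨ y' = -N
      · refine fin N (by omega) ((hH.1 _ _).trans ?_)
        rw [le_div_iff₀ (by linarith)]; linarith
      by_cases hxN : x' = N
      · obtain ⟨s, hs⟩ := Int.exists_eq_neg_ofNat (show y' ≤ 0 by omega)
        refine fin s (by omega) ?_
        rw [hxN, hs]; exact lin2 s
      · obtain ⟨s, hs⟩ := Int.exists_eq_neg_ofNat (show x' ≤ 0 by omega)
        have hyN : y' = N := by omega
        refine fin s (by omega) ?_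
        rw [hyN, hs]; exact lin1 s
    · simp only [Finset.mem_filter, Finset.mem_product, Finset.mem_Icc]; omega
  by_cases hq : 0 ≤ x ∧ 0 ≤ y
  · rw [hH.2.1 x y hq.1 hq.2]; positivity
  have h1 := main x y hx hy (by omega)
  have h2 := mul_le_mul_of_nonneg_left (hW3 k x y hk hx hy) hDpos.le
  have h3 : (N:ℝ) ^ (-(2/3):ℝ) * (k:ℝ) ^ (2/3:ℝ) ≤ 3 * ((k:ℝ)/r) ^ (2/3:ℝ) := by
    refine le_trans ?_ hmul
    rw [Real.rpow_neg (by positivity), mul_comm, ← div_eq_mul_inv, ← Real.div_rpow (by positivity) (by positivity)]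
    apply Real.rpow_le_rpow (by positivity) _ (by norm_num)
    rw [← mul_div_assoc, div_le_div_iff₀ (by linarith) (by linarith)]
    nlinarith
  calc H x y ≤ D * (c2 * (k:ℝ) ^ (2/3:ℝ)) := h1.trans h2
    _ = (2 / c1 * c2) * ((N:ℝ) ^ (-(2/3):ℝ) * (k:ℝ) ^ (2/3:ℝ)) := by rw [hD]; ring
    _ ≤ (2 / c1 * c2) * (3 * ((k:ℝ)/r) ^ (2/3:ℝ)) := mul_le_mul_of_nonneg_left h3 hC.le
    _ ≤ _ := by nlinarith

theorem hyp_of (r : ℕ) (h : Site 2 → ℝ) (hh : IsOrthHarm 2 r h) : Hyp r (fun x y => h ![x, y]) := by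
  obtain ⟨h1, h2, h3, h4⟩ := hh
  have hQ : ∀ x y : ℤ, 0 ≤ x → 0 ≤ y → h ![x, y] = 0 := by
    intro x y hx hy
    by_cases hm : ![x, y] ∈ cubeSet 2 r ∪ cubeBdry 2 r
    · refine h2 _ ⟨?_, hm⟩
      intro i; fin_cases i <;> simpa
    · exact h1 _ hm
  have hH : ∀ x y : ℤ, |x| ≤ (r:ℤ) → |y| ≤ (r:ℤ) → (x < 0 ∨ y < 0) →
      4 * h ![x, y] = h ![x+1, y] + h ![x-1, y] + h ![x, y+1] + h ![x, y-1] := by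
    intro x y hx hy hneg
    have := h4 ![x, y] ⟨by intro i; fin_cases i <;> simpa, by
      intro hc
      have a := hc 0
      have b := hc 1
      simp at a b
      omega⟩
    rw [this, Fin.sum_univ_two]
    have e1 : ![x, y] + unitVec 2 0 = ![x+1, y] := by
      funext i; fin_cases i <;> simp [unitVec]
    have e2 : ![x, y] - unitVec 2 0 = ![x-1, y] := by
      funext i; fin_cases i <;> simp [unitVec]
    have e3 : ![x, y] + unitVec 2 1 = ![x, y+1] := by
      funext i; fin_cases i <;> simp [unitVec]
    have e4 : ![x, y] - unitVec 2 1 = ![x, y-1] := by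
      funext i; fin_cases i <;> simp [unitVec]
    rw [e1, e2, e3, e4]
    push_cast; ring
  refine ⟨?_, hQ, hH⟩
  have off : ∀ x y : ℤ, ¬ (|x| ≤ (r:ℤ) ∧ |y| ≤ (r:ℤ) ∧ (x < 0 ∨ y < 0)) → h ![x, y] ≤ 1 := by
    intro x y hn
    by_cases hq : 0 ≤ x ∧ 0 ≤ y
    · rw [hQ x y hq.1 hq.2]; norm_num
    by_cases hm : ![x, y] ∈ cubeSet 2 r ∪ cubeBdry 2 r
    · rcases hm with hm | hm
      · exfalso
        have a := hm 0
        have b := hm 1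
        simp only [Matrix.cons_val_zero, Matrix.cons_val_one] at a b
        exact hn ⟨a, b, by omega⟩
      · refine (h3 _ ⟨hm, ?_⟩).le
        intro hc
        have a := hc 0
        have b := hc 1
        simp only [Matrix.cons_val_zero, Matrix.cons_val_one] at a b
        exact hq ⟨a, b⟩
    · rw [h1 _ hm]; norm_num
  intro x y
  by_cases hxy : |x| ≤ (r:ℤ) ∧ |y| ≤ (r:ℤ) ∧ (x < 0 ∨ y < 0)
  swap
  · exact off x y hxy
  have mem : ∀ x y : ℤ, (x, y) ∈ ((Finset.Icc (-(r:ℤ)) r) ×ˢ (Finset.Icc (-(r:ℤ)) r)).filter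
      (fun p => p.1 < 0 ∨ p.2 < 0) ↔ (|x| ≤ (r:ℤ) ∧ |y| ≤ (r:ℤ) ∧ (x < 0 ∨ y < 0)) := by
    intro x y
    simp only [Finset.mem_filter, Finset.mem_product, Finset.mem_Icc, abs_le]
    tauto
  have := max_pr _ (fun x y => h ![x, y] - 1) ?_ ?_ x y ((mem x y).mpr hxy)
  · linarith
  · intro x y hm
    obtain ⟨a, b, c⟩ := (mem x y).mp hm
    have := hH x y a b c
    linarith
  · intro x y _ u v hm _
    rw [mem] at hm
    have := off u v hm
    linarith

end Helpers

theorem lemma_planarcase :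
    ∃ a c : ℝ, 0 < a ∧ 0 < c ∧ ∀ k r : ℕ, 1 ≤ k → k ≤ r →
      0 < (r : ℝ) - a * Real.log r →
      pkr 2 k r ≤ c * (((k : ℝ) + a * Real.log r) / ((r : ℝ) - a * Real.log r)) ^ ((2 : ℝ) / 3) := by
  obtain ⟨C, hC, hcore⟩ := core
  refine ⟨1, C, one_pos, hC, ?_⟩
  intro k r hk hkr hpos
  have hr : (1:ℝ) ≤ r := by exact_mod_cast hk.trans hkr
  have hlog : 0 ≤ Real.log r := Real.log_nonneg hr
  have hmono : C * ((k:ℝ)/r) ^ (2/3:ℝ) ≤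
      C * (((k : ℝ) + 1 * Real.log r) / ((r : ℝ) - 1 * Real.log r)) ^ ((2 : ℝ) / 3) := by
    refine mul_le_mul_of_nonneg_left ?_ hC.le
    refine Real.rpow_le_rpow (by positivity) ?_ (by norm_num)
    exact div_le_div₀ (by positivity) (by linarith) hpos (by linarith)
  refine le_trans ?_ hmono
  unfold pkr
  refine csSup_le ⟨_, 0, by intro i; simp, rfl⟩ ?_
  rintro t ⟨x, hx, rfl⟩
  unfold orthHarm
  split_ifs with hex
  · have hx2 : x = ![x 0, x 1] := by funext i; fin_cases i <;> rfl
    rw [hx2]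
    exact hcore k r _ hk hkr (hyp_of r _ hex.choose_spec) (x 0) (x 1) (hx 0) (hx 1)
  · simp only [Pi.zero_apply]; positivity

end RotorRouterPaper
end
end

section
/- For every d ≥ 1 there exist constants c, C > 0 depending only on d such that for every n ≥ 1 and every finite set A ⊆ ℤ^d with |A| = n, ψ(A) − ψ(B_n) ≥ c |A Δ B_n|² n^{−1 + 2/d} − C n^{1 + 1/d}, where A Δ B_n denotes the symmetric difference. -/
open scoped BigOperators Pointwise symmDiff
open MeasureTheory Filter

noncomputable section
open scoped Classical
namespace RotorRouterPaper

/-- The unit cell of points whose coordinatewise floor is `x`. -/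
def cell {d : ℕ} (x : Site d) : Set (EuclideanSpace ℝ (Fin d)) := {z | ∀ i, ⌊z i⌋ = x i}

lemma cell_eq {d : ℕ} (x : Site d) : cell x = (MeasurableEquiv.toLp 2 (Fin d → ℝ)).symm ⁻¹'
    (Set.pi Set.univ fun i => Set.Ico (x i : ℝ) (x i + 1)) := by
  ext z
  simp [cell, Int.floor_eq_iff, Set.mem_pi]

lemma cell_meas {d : ℕ} (x : Site d) : MeasurableSet (cell x) := by
  rw [cell_eq]
  exact (MeasurableEquiv.toLp 2 (Fin d → ℝ)).symm.measurable
    (MeasurableSet.univ_pi fun i => measurableSet_Ico)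

lemma cell_vol {d : ℕ} (x : Site d) : volume (cell x) = 1 := by
  rw [cell_eq, (EuclideanSpace.volume_preserving_symm_measurableEquiv_toLp (Fin d)).measure_preimage_equiv, volume_pi_pi]
  simp

lemma nsq_nonneg {d : ℕ} (x : Site d) : 0 ≤ nsq x := Finset.sum_nonneg fun _ _ => sq_nonneg _

lemma enorm_nonneg {d : ℕ} (x : Site d) : 0 ≤ enorm x := Real.sqrt_nonneg _

lemma enorm_sq {d : ℕ} (x : Site d) : enorm x ^ 2 = nsq x := Real.sq_sqrt (nsq_nonneg x)

lemma cell_near {d : ℕ} (x : Site d) (z : EuclideanSpace ℝ (Fin d)) (hz : z ∈ cell x) :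
    |‖z‖ - enorm x| ≤ √(d : ℝ) := by
  have h1 : enorm x = ‖(WithLp.toLp 2 (fun i => (x i : ℝ)) : EuclideanSpace ℝ (Fin d))‖ := by
    rw [EuclideanSpace.norm_eq]; simp [enorm, nsq]
  rw [h1]
  refine (abs_norm_sub_norm_le _ _).trans ?_
  rw [EuclideanSpace.norm_eq]
  apply Real.sqrt_le_sqrt
  calc _ ≤ ∑ i : Fin d, (1 : ℝ) := by
        apply Finset.sum_le_sum
        intro i _
        have := Int.floor_eq_iff.1 (hz i)
        rw [Real.norm_eq_abs, sq_abs]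
        simp only [PiLp.sub_apply]
        nlinarith
    _ = d := by simp

lemma card_le {d : ℕ} (T : Finset (Site d)) (V : Set (EuclideanSpace ℝ (Fin d)))
    (h : ∀ x ∈ T, cell x ⊆ V) : (T.card : ENNReal) ≤ volume V := by
  have : volume (⋃ x ∈ T, cell x) = T.card := by
    rw [measure_biUnion_finset]
    · simp [cell_vol]
    · intro x _ y _ hxy
      refine Set.disjoint_left.2 fun z hx hy => hxy ?_
      funext i
      rw [← hx i, ← hy i]
    · intro x _; exact cell_meas x
  rw [← this]
  exact measure_mono (Set.iUnion₂_subset h)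

lemma le_card {d : ℕ} (T : Finset (Site d)) (V : Set (EuclideanSpace ℝ (Fin d)))
    (h : V ⊆ ⋃ x ∈ T, cell x) : volume V ≤ (T.card : ENNReal) := by
  refine (measure_mono h).trans ((measure_biUnion_finset_le _ _).trans ?_)
  simp [cell_vol]

lemma ballVol_pos (d : ℕ) : 0 < ballVol d :=
  ENNReal.toReal_pos (Metric.measure_ball_pos _ _ one_pos).ne' measure_ball_lt_top.ne

lemma vol_ball (d : ℕ) (hd : 1 ≤ d) (r : ℝ) (hr : 0 ≤ r) :
    volume (Metric.ball (0 : EuclideanSpace ℝ (Fin d)) r) = ENNReal.ofReal (ballVol d * r ^ d) := by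
  have : Nonempty (Fin d) := ⟨⟨0, hd⟩⟩
  rw [Measure.addHaar_ball _ _ hr, mul_comm (ballVol d), ENNReal.ofReal_mul (by positivity), ballVol,
    ENNReal.ofReal_toReal measure_ball_lt_top.ne]
  simp

lemma vol_closedBall (d : ℕ) (r : ℝ) (hr : 0 ≤ r) :
    volume (Metric.closedBall (0 : EuclideanSpace ℝ (Fin d)) r)
      = ENNReal.ofReal (ballVol d * r ^ d) := by
  rw [Measure.addHaar_closedBall _ _ hr, mul_comm (ballVol d), ENNReal.ofReal_mul (by positivity),
    ballVol, ENNReal.ofReal_toReal measure_ball_lt_top.ne]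
  simp

lemma card_annulus {d : ℕ} (hd : 1 ≤ d) (T : Finset (Site d)) (a b : ℝ) (ha : 0 ≤ a) (hab : a ≤ b)
    (h : ∀ x ∈ T, a + √(d : ℝ) ≤ enorm x ∨ a = 0) (h' : ∀ x ∈ T, enorm x + √(d : ℝ) ≤ b) :
    (T.card : ℝ) ≤ ballVol d * (b ^ d - a ^ d) := by
  have hv := card_le T (Metric.closedBall 0 b \ Metric.ball 0 a) (by
    intro x hx z hz
    have := abs_le.1 (cell_near x z hz)
    have h1 := h' x hx
    simp only [Set.mem_sdiff, Metric.mem_closedBall, Metric.mem_ball, dist_zero_right, not_lt]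
    refine ⟨by linarith, ?_⟩
    rcases h x hx with h | h
    · linarith
    · rw [h]; exact norm_nonneg z)
  have hsub : Metric.ball (0 : EuclideanSpace ℝ (Fin d)) a ⊆ Metric.closedBall 0 b :=
    (Metric.ball_subset_closedBall).trans (Metric.closedBall_subset_closedBall hab)
  have hp := ballVol_pos d
  rw [measure_sdiff hsub measurableSet_ball.nullMeasurableSet measure_ball_lt_top.ne,
    vol_ball d hd a ha, vol_closedBall d b (ha.trans hab),
    ← ENNReal.ofReal_sub _ (by positivity), ← mul_sub, ← ENNReal.ofReal_natCast] at hv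
  refine (ENNReal.ofReal_le_ofReal_iff ?_).1 hv
  have := pow_le_pow_left₀ ha hab d
  exact mul_nonneg hp.le (by linarith)

lemma le_card_ball {d : ℕ} (hd : 1 ≤ d) (T : Finset (Site d)) (r : ℝ) (hr : 0 ≤ r)
    (h : ∀ x, enorm x < r + √(d : ℝ) → x ∈ T) :
    ballVol d * r ^ d ≤ T.card := by
  have hv := le_card T (Metric.ball 0 r) (by
    intro z hz
    have hz' : z ∈ cell (fun i => ⌊z i⌋) := fun i => rfl
    have := abs_le.1 (cell_near _ z hz')
    rw [Metric.mem_ball, dist_zero_right] at hz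
    exact Set.mem_biUnion (h _ (by linarith)) hz')
  rw [vol_ball d hd r hr, ← ENNReal.ofReal_natCast] at hv
  exact (ENNReal.ofReal_le_ofReal_iff (by positivity)).1 hv

lemma pow_sub_le (d : ℕ) (a b : ℝ) (ha : 0 ≤ a) (hab : a ≤ b) :
    b ^ d - a ^ d ≤ d * b ^ (d - 1) * (b - a) := by
  have hb := ha.trans hab
  rw [← (Commute.all b a).geom_sum₂_mul]
  apply mul_le_mul_of_nonneg_right _ (by linarith)
  calc _ ≤ ∑ i ∈ Finset.range d, b ^ (d - 1) := by
        apply Finset.sum_le_sum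
        intro i hi
        have := Finset.mem_range.1 hi
        calc b ^ i * a ^ (d - 1 - i) ≤ b ^ i * b ^ (d - 1 - i) := by gcongr
          _ = b ^ (d - 1) := by rw [← pow_add]; congr 1; omega
    _ = _ := by simp

lemma finite_ball {d : ℕ} (R : ℝ) : {x : Site d | enorm x < R}.Finite := by
  refine (Set.finite_Icc (fun _ => -⌈R⌉ : Site d) (fun _ => ⌈R⌉)).subset ?_
  intro x hx
  have key : ∀ i, |(x i : ℝ)| ≤ ⌈R⌉ := by
    intro i
    have h1 : |(x i : ℝ)| ≤ enorm x := by
      apply Real.le_sqrt_of_sq_le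
      rw [sq_abs]
      exact Finset.single_le_sum (f := fun i => (x i : ℝ) ^ 2) (fun i _ => sq_nonneg _)
        (Finset.mem_univ i)
    exact h1.trans ((le_of_lt hx).trans (Int.le_ceil R))
  constructor
  · intro i
    have := (abs_le.1 (key i)).1
    exact_mod_cast this
  · intro i
    have := (abs_le.1 (key i)).2
    exact_mod_cast this

lemma count_near {d : ℕ} (hd : 1 ≤ d) (R δ : ℝ) (hR : 0 < R) (hδ : 0 ≤ δ) (T : Finset (Site d))
    (h : ∀ x ∈ T, |enorm x - R| ≤ δ) :
    (T.card : ℝ) ≤ ballVol d * (d * (R + δ + √(d : ℝ)) ^ (d - 1) * (2 * (δ + √(d : ℝ)))) := by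
  have hk : 0 ≤ √(d : ℝ) := Real.sqrt_nonneg _
  have hab : max 0 (R - δ - √(d : ℝ)) ≤ R + δ + √(d : ℝ) := max_le (by linarith) (by linarith)
  refine (card_annulus hd T (max 0 (R - δ - √(d : ℝ))) (R + δ + √(d : ℝ)) (le_max_left _ _) hab
    ?_ ?_).trans ?_
  · intro x hx
    have := abs_le.1 (h x hx)
    rcases le_total (R - δ - √(d : ℝ)) 0 with h0 | h0
    · right; exact max_eq_left h0
    · left; rw [max_eq_right h0]; linarith
  · intro x hx
    have := abs_le.1 (h x hx)
    linarith
  · apply mul_le_mul_of_nonneg_left _ (ballVol_pos d).le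
    refine (pow_sub_le d _ _ (le_max_left _ _) hab).trans ?_
    apply mul_le_mul_of_nonneg_left _ (by positivity)
    have := le_max_right 0 (R - δ - √(d : ℝ))
    linarith

lemma ball_card {d : ℕ} (hd : 1 ≤ d) (R : ℝ) (hR : 0 < R) (B : Finset (Site d))
    (hB : ∀ x, x ∈ B ↔ enorm x < R) :
    |(B.card : ℝ) - ballVol d * R ^ d|
      ≤ ballVol d * (d * (R + √(d : ℝ)) ^ (d - 1) * √(d : ℝ)) := by
  have hk : 0 ≤ √(d : ℝ) := Real.sqrt_nonneg _
  have hp := ballVol_pos d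
  have hd0 : d ≠ 0 := by omega
  rw [abs_le]
  constructor
  · have h2 : ballVol d * max 0 (R - √(d : ℝ)) ^ d ≤ B.card := by
      rcases le_total (R - √(d : ℝ)) 0 with h0 | h0
      · rw [max_eq_left h0, zero_pow hd0, mul_zero]; positivity
      · rw [max_eq_right h0]
        exact le_card_ball hd B _ h0 fun x hx => (hB x).2 (by linarith)
    have h3 := pow_sub_le d (max 0 (R - √(d : ℝ))) R (le_max_left _ _) (max_le hR.le (by linarith))
    have h4 : (d : ℝ) * R ^ (d - 1) * (R - max 0 (R - √(d : ℝ)))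
        ≤ d * (R + √(d : ℝ)) ^ (d - 1) * √(d : ℝ) := by
      have h5 := le_max_right 0 (R - √(d : ℝ))
      have h6 : max 0 (R - √(d : ℝ)) ≤ R := max_le hR.le (by linarith)
      gcongr
      · linarith
      · linarith
    have h7 := mul_le_mul_of_nonneg_left (h3.trans h4) hp.le
    linarith
  · have h1 := card_annulus hd B 0 (R + √(d : ℝ)) le_rfl (by linarith) (fun _ _ => Or.inr rfl)
      (fun x hx => by have := (hB x).1 hx; linarith)
    rw [zero_pow hd0, sub_zero] at h1
    have h3 := pow_sub_le d R (R + √(d : ℝ)) hR.le (by linarith)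
    have h7 := mul_le_mul_of_nonneg_left h3 hp.le
    have h8 : R + √(d : ℝ) - R = √(d : ℝ) := by ring
    rw [h8] at h7
    linarith

lemma core_s16 {d : ℕ} (S : Finset (Site d)) (R P K κ M : ℝ) (hR : 0 < R) (hP : 0 < P) (hK : 0 < K)
    (hM : 0 < M) (hκ : 0 ≤ κ)
    (hcount : ∀ δ, 0 ≤ δ → δ ≤ R → ∀ T : Finset (Site d), (∀ x ∈ T, |enorm x - R| ≤ δ) →
      (T.card : ℝ) ≤ K * P * (δ + κ))
    (hs : (S.card : ℝ) ≤ M * (P * R)) :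
    ((S.card : ℝ) ^ 2 * R - (4 * K * κ) ^ 2 * P ^ 2 * R) / (8 * (K + M))
      ≤ (∑ x ∈ S, |nsq x - R ^ 2|) * P := by
  have hsum : 0 ≤ ∑ x ∈ S, |nsq x - R ^ 2| := Finset.sum_nonneg fun _ _ => abs_nonneg _
  set s : ℝ := (S.card : ℝ) with hsdef
  have hs0 : 0 ≤ s := Nat.cast_nonneg _
  rcases lt_or_ge s (4 * K * κ * P) with hc | hc
  · refine le_trans ?_ (mul_nonneg hsum hP.le)
    apply div_nonpos_of_nonpos_of_nonneg _ (by positivity)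
    have : s ^ 2 ≤ (4 * K * κ * P) ^ 2 := pow_le_pow_left₀ hs0 hc.le 2
    nlinarith
  · set δ := s / (4 * (K + M) * P) with hδ
    have hδ0 : 0 ≤ δ := by positivity
    have hδe : δ * (4 * (K + M) * P) = s := div_mul_cancel₀ _ (by positivity)
    have hδR : δ ≤ R := by
      rw [hδ, div_le_iff₀ (by positivity)]
      have : 0 ≤ P * R := by positivity
      nlinarith
    have hT := hcount δ hδ0 hδR (S.filter fun x => |enorm x - R| ≤ δ)
      (fun x hx => (Finset.mem_filter.1 hx).2)
    have hT2 : ((S.filter fun x => |enorm x - R| ≤ δ).card : ℝ) ≤ s / 2 := by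
      have : 0 ≤ M * P * δ := by positivity
      nlinarith
    have hcomp : ((S.filter fun x => |enorm x - R| ≤ δ).card : ℝ)
        + ((S.filter fun x => ¬ |enorm x - R| ≤ δ).card : ℝ) = s := by
      rw [hsdef]; exact_mod_cast Finset.card_filter_add_card_filter_not _
    have hlow : (s / 2) * (δ * R) ≤ ∑ x ∈ S, |nsq x - R ^ 2| := by
      calc (s / 2) * (δ * R)
          ≤ ((S.filter fun x => ¬ |enorm x - R| ≤ δ).card : ℝ) * (δ * R) := by
            apply mul_le_mul_of_nonneg_right _ (by positivity)
            linarith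
        _ = ∑ x ∈ S.filter (fun x => ¬ |enorm x - R| ≤ δ), δ * R := by simp
        _ ≤ ∑ x ∈ S.filter (fun x => ¬ |enorm x - R| ≤ δ), |nsq x - R ^ 2| := by
            apply Finset.sum_le_sum
            intro x hx
            have h1 := (Finset.mem_filter.1 hx).2
            push Not at h1
            have h2 := enorm_nonneg x
            rw [← enorm_sq, sq_sub_sq, abs_mul, abs_of_nonneg (by linarith : 0 ≤ enorm x + R),
              mul_comm]
            exact mul_le_mul (by linarith) h1.le hδ0 (by linarith)
        _ ≤ _ := Finset.sum_le_sum_of_subset_of_nonneg (Finset.filter_subset _ _)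
            fun _ _ _ => abs_nonneg _
    have h9 := mul_le_mul_of_nonneg_right hlow hP.le
    refine le_trans ?_ h9
    rw [div_le_iff₀ (by positivity)]
    have h10 : s / 2 * (δ * R) * P * (8 * (K + M)) = s ^ 2 * R := by
      calc _ = s * R * (δ * (4 * (K + M) * P)) := by ring
        _ = _ := by rw [hδe]; ring
    rw [h10]
    have : 0 ≤ (4 * K * κ) ^ 2 * P ^ 2 * R := by positivity
    linarith

lemma psi_diff {d : ℕ} (A B : Finset (Site d)) (R : ℝ) (hB : ∀ x, x ∈ B ↔ enorm x < R)
    (hR : 0 < R) :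
    psi (A : Set (Site d)) - psi (B : Set (Site d))
      = (∑ x ∈ A ∆ B, |nsq x - R ^ 2|) + R ^ 2 * ((A.card : ℝ) - B.card) := by
  have e : ∀ F : Finset (Site d), psi (F : Set (Site d)) = ∑ x ∈ F, nsq x := fun F =>
    finsum_mem_coe_finset _ _
  have e2 : ∀ F : Finset (Site d), ∑ x ∈ F, (nsq x - R ^ 2) = ∑ x ∈ F, nsq x - R ^ 2 * F.card := by
    intro F; rw [Finset.sum_sub_distrib]; simp [mul_comm]
  have hdisj : Disjoint (A \ B) (B \ A) := disjoint_sdiff_sdiff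
  have h1 : ∑ x ∈ A ∆ B, |nsq x - R ^ 2|
      = ∑ x ∈ A \ B, (nsq x - R ^ 2) - ∑ x ∈ B \ A, (nsq x - R ^ 2) := by
    have : A ∆ B = A \ B ∪ B \ A := rfl
    rw [this, Finset.sum_union hdisj, sub_eq_add_neg, ← Finset.sum_neg_distrib]
    congr 1
    · apply Finset.sum_congr rfl
      intro x hx
      have h2 : ¬ enorm x < R := fun h => (Finset.mem_sdiff.1 hx).2 ((hB x).2 h)
      push Not at h2
      rw [abs_of_nonneg]
      rw [← enorm_sq]
      nlinarith
    · apply Finset.sum_congr rfl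
      intro x hx
      have h2 : enorm x < R := (hB x).1 (Finset.mem_sdiff.1 hx).1
      have h3 := enorm_nonneg x
      rw [abs_of_nonpos]
      rw [← enorm_sq]
      nlinarith
  have h2 := Finset.sum_inter_add_sum_sdiff A B (fun x => nsq x - R ^ 2)
  have h3 := Finset.sum_inter_add_sum_sdiff B A (fun x => nsq x - R ^ 2)
  rw [Finset.inter_comm B A] at h3
  rw [e2] at h2 h3
  rw [h1, e, e]
  linarith [e2 A, e2 B]

set_option maxHeartbeats 2000000 in
theorem psi_symmDiff_lower (d : ℕ) (hd : 1 ≤ d) :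
    ∃ c C : ℝ, 0 < c ∧ 0 < C ∧ ∀ n : ℕ, 1 ≤ n → ∀ A : Set (Site d), A.Finite → A.ncard = n →
      c * (((A ∆ lball d n).ncard : ℝ)) ^ 2 * (n : ℝ) ^ (-(1 : ℝ) + 2 / (d : ℝ))
          - C * (n : ℝ) ^ (1 + 1 / (d : ℝ))
        ≤ psi A - psi (lball d n) := by
  have hω := ballVol_pos d
  set ω := ballVol d with hωd
  have hd0 : d ≠ 0 := by omega
  have hdR : (0 : ℝ) < d := by exact_mod_cast hd
  have hκ : 0 < √(d : ℝ) := Real.sqrt_pos.2 hdR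
  set κ := √(d : ℝ) with hκd
  obtain ⟨R1, hR1, hR1d⟩ : ∃ R1 : ℝ, 0 < R1 ∧ ω * R1 ^ d = 1 := by
    refine ⟨(1 / ω) ^ ((d : ℝ)⁻¹), by positivity, ?_⟩
    rw [Real.rpow_inv_natCast_pow (by positivity) hd0]
    field_simp
  set L := κ / R1 with hL
  have hL0 : 0 < L := by positivity
  set K := 2 * ω * d * (2 + L) ^ (d - 1) with hKd
  have hK : 0 < K := by positivity
  set M := 2 * ω + K * L with hMd
  have hM : 0 < M := by positivity
  set E1 := (4 * K * κ) ^ 2 / (8 * (K + M)) with hE1d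
  have hE1 : 0 < E1 := by positivity
  refine ⟨R1 ^ 2 * ω / (8 * (K + M)), E1 / ω + K * κ * R1 / ω, by positivity, by positivity, ?_⟩
  intro n hn A hA hAn
  have hn1 : (1 : ℝ) ≤ n := by exact_mod_cast hn
  have hn0 : (0 : ℝ) < n := by linarith
  obtain ⟨q, hq1, hqd, hq2, hq3⟩ : ∃ q : ℝ, 1 ≤ q ∧ q ^ d = n ∧
      (n : ℝ) ^ (-(1 : ℝ) + 2 / (d : ℝ)) = q ^ 2 / n ∧ (n : ℝ) ^ (1 + 1 / (d : ℝ)) = n * q := by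
    refine ⟨(n : ℝ) ^ ((d : ℝ)⁻¹), Real.one_le_rpow hn1 (by positivity),
      Real.rpow_inv_natCast_pow hn0.le hd0, ?_, ?_⟩
    · rw [Real.rpow_add hn0, Real.rpow_neg_one, ← Real.rpow_natCast, ← Real.rpow_mul hn0.le,
        div_eq_mul_inv, div_eq_mul_inv, mul_comm]
      congr 2
      push_cast
      ring
    · rw [Real.rpow_add hn0, Real.rpow_one, one_div]
  have hq0 : 0 < q := by linarith
  rw [hq2, hq3]
  set R := R1 * q with hRd
  have hR : 0 < R := by positivity
  have hRpow : ω * R ^ d = n := by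
    rw [hRd, mul_pow, hqd, ← mul_assoc, hR1d, one_mul]
  have hκL : κ ≤ L * R := by
    have : L * R = κ * q := by rw [hL, hRd]; field_simp
    rw [this]; nlinarith
  set P := R ^ (d - 1) with hPd
  have hP : 0 < P := by positivity
  have hPR : P * R = R ^ d := pow_sub_one_mul hd0 R
  have hPRn : ω * (P * R) = n := by rw [hPR, hRpow]
  have hball : lball d n = {x : Site d | enorm x < R} := by
    ext x
    simp only [lball, Set.mem_setOf_eq]
    rw [← hRpow, mul_lt_mul_iff_right₀ hω]
    exact pow_lt_pow_iff_left₀ (enorm_nonneg x) hR.le hd0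
  have hBfin : (lball d n).Finite := by rw [hball]; exact finite_ball R
  obtain ⟨B, hBe⟩ : ∃ B : Finset (Site d), (B : Set (Site d)) = lball d n :=
    ⟨hBfin.toFinset, hBfin.coe_toFinset⟩
  obtain ⟨A', hAe⟩ : ∃ B : Finset (Site d), (B : Set (Site d)) = A := ⟨hA.toFinset, hA.coe_toFinset⟩
  have hB : ∀ x, x ∈ B ↔ enorm x < R := by
    intro x; rw [← Finset.mem_coe, hBe, hball]; rfl
  rw [← hAe, Set.ncard_coe_finset] at hAn
  rw [← hBe, ← hAe, ← Finset.coe_symmDiff, Set.ncard_coe_finset, psi_diff A' B R hB hR]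
  have hcard := ball_card hd R hR B hB
  rw [hRpow] at hcard
  have hcard2 : |(B.card : ℝ) - n| ≤ K * P * κ := by
    refine hcard.trans ?_
    have h1 : (R + κ) ^ (d - 1) ≤ (2 + L) ^ (d - 1) * P := by
      rw [hPd, ← mul_pow]
      apply pow_le_pow_left₀ (by positivity)
      linarith [add_mul 2 L R]
    calc ω * (d * (R + κ) ^ (d - 1) * κ) ≤ ω * (d * ((2 + L) ^ (d - 1) * P) * κ) := by gcongr
      _ ≤ 2 * (ω * (d * ((2 + L) ^ (d - 1) * P) * κ)) := by
          have : 0 ≤ ω * (d * ((2 + L) ^ (d - 1) * P) * κ) := by positivity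
          linarith
      _ = K * P * κ := by rw [hKd]; ring
  have habs := abs_le.1 hcard2
  have hscard : ((A' ∆ B).card : ℝ) ≤ M * (P * R) := by
    have h1 : (A' ∆ B).card ≤ A'.card + B.card := by
      refine (Finset.card_le_card ?_).trans (Finset.card_union_le A' B)
      exact symmDiff_le_sup
    have h2 : ((A' ∆ B).card : ℝ) ≤ A'.card + B.card := by exact_mod_cast h1
    rw [hAn] at h2
    have h3 : K * P * κ ≤ K * P * (L * R) := by gcongr
    rw [hMd]
    nlinarith
  have hcore := core_s16 (A' ∆ B) R P K κ M hR hP hK hM hκ.le (by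
    intro δ hδ hδR T hT
    refine (count_near hd R δ hR hδ T hT).trans ?_
    have h1 : (R + δ + κ) ^ (d - 1) ≤ (2 + L) ^ (d - 1) * P := by
      rw [hPd, ← mul_pow]
      apply pow_le_pow_left₀ (by positivity)
      linarith [add_mul 2 L R]
    calc ω * (d * (R + δ + κ) ^ (d - 1) * (2 * (δ + κ)))
        ≤ ω * (d * ((2 + L) ^ (d - 1) * P) * (2 * (δ + κ))) :=
          mul_le_mul_of_nonneg_left (mul_le_mul_of_nonneg_right
            (mul_le_mul_of_nonneg_left h1 hdR.le) (by linarith)) hω.le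
      _ = K * P * (δ + κ) := by rw [hKd]; ring) hscard
  set s : ℝ := ((A' ∆ B).card : ℝ) with hsd
  set W := ∑ x ∈ A' ∆ B, |nsq x - R ^ 2| with hW
  rw [hAn]
  have hfirst : R1 ^ 2 * ω / (8 * (K + M)) * s ^ 2 * (q ^ 2 / n) - E1 * (P * R) ≤ W := by
    have h1 : R1 ^ 2 * ω / (8 * (K + M)) * s ^ 2 * (q ^ 2 / n) - E1 * (P * R)
        = (s ^ 2 * R - (4 * K * κ) ^ 2 * P ^ 2 * R) / (8 * (K + M)) / P := by
      rw [← hPRn, hE1d]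
      have hq : q = R / R1 := by rw [hRd]; field_simp
      rw [hq]
      clear_value R P K M κ ω s
      field_simp
    rw [h1, div_le_iff₀ hP]
    exact hcore
  have hsecond : -(K * κ * R1 / ω * (n * q)) ≤ R ^ 2 * ((n : ℝ) - B.card) := by
    have h1 : K * κ * R1 / ω * (n * q) = R ^ 2 * (K * P * κ) := by
      rw [← hPRn]
      have hq : q = R / R1 := by rw [hRd]; field_simp
      rw [hq]
      clear_value R P K M κ ω s
      field_simp
    rw [h1, ← mul_neg]
    apply mul_le_mul_of_nonneg_left _ (by positivity)
    linarith
  have hthird : E1 * (P * R) ≤ E1 / ω * (n * q) := by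
    have h1 : E1 / ω * (n * q) = E1 * (P * R) * q := by
      rw [← hPRn]
      clear_value R P K M κ ω s E1
      field_simp
    rw [h1]
    have : 0 ≤ E1 * (P * R) := by positivity
    nlinarith
  have : (E1 / ω + K * κ * R1 / ω) * (n * q)
      = E1 / ω * (n * q) + K * κ * R1 / ω * (n * q) := by ring
  linarith

end RotorRouterPaper
end
end
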